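/- arXiv:1801.00573 — 4 statements merged into one kernel-verified Lean document; each statement's English description precedes it below -/
import Mathlib

section
/- (Lemma 2.1, spectral radius bound) Let E be a real Banach space, T(t) (t ≥ 0) a C₀-semigroup on E with ‖T(t)‖ ≤ M e^{−ν t} for all t ≥ 0 (M ≥ 1, ν > 0), ω > 0, and let P be the bounded linear operator on C_ω(ℝ, E) defined by (Ph)(t) = (I − T(ω))⁻¹ ∫_{t−ω}^t T(t − s) h(s) ds. Then for every n ≥ 1 and every h ∈ C_ω(ℝ, E), ‖Pⁿ h‖_C ≤ M ν^{−n} ‖h‖_C; consequently limsup_{n→∞} ‖Pⁿ‖^{1/n} ≤ 1/ν, i.e. the spectral radius of P is at most 1/ν. -/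
open BoundedContinuousFunction

/-- The subspace `C_ω(ℝ, E)` of ω-periodic bounded continuous functions,
as a submodule of the Banach space of bounded continuous functions
(for continuous ω-periodic functions the sup norm over `ℝ` coincides with
`‖u‖_C = max_{t ∈ [0,ω]} ‖u t‖`). -/
noncomputable def periodicBCF (E : Type*) [NormedAddCommGroup E] [NormedSpace ℝ E]
    (ω : ℝ) : Submodule ℝ (BoundedContinuousFunction ℝ E) where
  carrier := {f | Function.Periodic f ω}
  add_mem' := by
    intro f g hf hg t
    simp only [BoundedContinuousFunction.coe_add, Pi.add_apply, hf t, hg t]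
  zero_mem' := by intro t; simp
  smul_mem' := by
    intro c f hf t
    simp only [BoundedContinuousFunction.coe_smul, Pi.smul_apply, hf t]

/-!
Put `|x| = sup_{t ≥ 0} e^{νt} ‖T(t) x‖`. The decay bound gives `‖x‖ ≤ |x| ≤ M ‖x‖`, and for this
norm the semigroup is contractive with rate `ν`: `|T(t) x| ≤ e^{-νt} |x|`. Hence `(I - T(ω))⁻¹` has
norm at most `(1 - e^{-νω})⁻¹`, while `|∫_{t-ω}^t T(t-s) h(s) ds|` is at most
`∫_{t-ω}^t e^{-ν(t-s)} ds = ν⁻¹ (1 - e^{-νω})` times `sup |h|`. The two factors cancel, so `P` has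
norm at most `ν⁻¹` for the renormed supremum norm, and the constant `M` is paid only once, when the
bound on `Pⁿ` is transferred to the original norm.
-/

open MeasureTheory Filter Topology

section OperatorFamily

variable {X 𝕜 E F : Type*} [TopologicalSpace X] [NontriviallyNormedField 𝕜]
  [SeminormedAddCommGroup E] [NormedSpace 𝕜 E] [SeminormedAddCommGroup F] [NormedSpace 𝕜 F]

theorem continuousOn_uncurry_apply_of_norm_le {L : X → E →L[𝕜] F} {s : Set X} {C : ℝ}
    (hC : ∀ a ∈ s, ‖L a‖ ≤ C) (hL : ∀ x, ContinuousOn (fun a ↦ L a x) s) :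
    ContinuousOn (fun p : X × E ↦ L p.1 p.2) (s ×ˢ Set.univ) := by
  refine continuousOn_prod_of_continuousOn_lipschitzOnWith' _ C.toNNReal (fun a ha ↦ ?_)
    fun x _ ↦ hL x
  exact ((L a).lipschitz.weaken (NNReal.le_toNNReal_of_coe_le (hC a ha))).lipschitzOnWith

end OperatorFamily

section DecayNorm

variable {E : Type*} [NormedAddCommGroup E] [NormedSpace ℝ E] {T : ℝ → E →L[ℝ] E} {M ν : ℝ}

/-- The norm `|x| = sup_{t ≥ 0} e^{νt} ‖T(t) x‖`, equivalent to `‖x‖` when `T` is a semigroup with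
`‖T(t)‖ ≤ M e^{-νt}`. When the supremum is infinite, its value here is `0`. -/
noncomputable def decayNorm (T : ℝ → E →L[ℝ] E) (ν : ℝ) (x : E) : ℝ :=
  ⨆ t : NNReal, Real.exp (ν * t) * ‖T t x‖

theorem exp_mul_le_iff_le_mul_exp_neg {a K t : ℝ} :
    Real.exp (ν * t) * a ≤ K ↔ a ≤ K * Real.exp (-ν * t) := by
  rw [neg_mul, Real.exp_neg, ← div_eq_mul_inv, le_div_iff₀' (Real.exp_pos _)]

theorem decayNorm_le {x : E} {K : ℝ} (hK : ∀ t, 0 ≤ t → ‖T t x‖ ≤ K * Real.exp (-ν * t)) :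
    decayNorm T ν x ≤ K :=
  ciSup_le fun t ↦ exp_mul_le_iff_le_mul_exp_neg.2 (hK t t.2)

theorem norm_apply_le_of_norm_le_exp (hT : ∀ t, 0 ≤ t → ‖T t‖ ≤ M * Real.exp (-ν * t))
    (x : E) {t : ℝ} (ht : 0 ≤ t) : ‖T t x‖ ≤ M * ‖x‖ * Real.exp (-ν * t) := by
  rw [mul_right_comm]
  exact (T t).le_of_opNorm_le (hT t ht) x

theorem decayNorm_le_mul_norm (hT : ∀ t, 0 ≤ t → ‖T t‖ ≤ M * Real.exp (-ν * t)) (x : E) :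
    decayNorm T ν x ≤ M * ‖x‖ :=
  decayNorm_le fun _ ht ↦ norm_apply_le_of_norm_le_exp hT x ht

theorem norm_apply_le_decayNorm_mul_exp (hT : ∀ t, 0 ≤ t → ‖T t‖ ≤ M * Real.exp (-ν * t))
    (x : E) {t : ℝ} (ht : 0 ≤ t) : ‖T t x‖ ≤ decayNorm T ν x * Real.exp (-ν * t) := by
  have hbdd : BddAbove (Set.range fun t : NNReal ↦ Real.exp (ν * t) * ‖T t x‖) :=
    ⟨M * ‖x‖, Set.forall_mem_range.2 fun t ↦
      exp_mul_le_iff_le_mul_exp_neg.2 (norm_apply_le_of_norm_le_exp hT x t.2)⟩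
  exact exp_mul_le_iff_le_mul_exp_neg.1 (le_ciSup hbdd ⟨t, ht⟩)

theorem norm_le_decayNorm (hT₀ : T 0 = ContinuousLinearMap.id ℝ E)
    (hT : ∀ t, 0 ≤ t → ‖T t‖ ≤ M * Real.exp (-ν * t)) (x : E) : ‖x‖ ≤ decayNorm T ν x := by
  simpa [hT₀] using norm_apply_le_decayNorm_mul_exp hT x le_rfl

theorem decayNorm_add_le (hT : ∀ t, 0 ≤ t → ‖T t‖ ≤ M * Real.exp (-ν * t)) (x y : E) :
    decayNorm T ν (x + y) ≤ decayNorm T ν x + decayNorm T ν y := by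
  refine decayNorm_le fun t ht ↦ ?_
  rw [map_add, add_mul]
  exact norm_add_le_of_le (norm_apply_le_decayNorm_mul_exp hT x ht)
    (norm_apply_le_decayNorm_mul_exp hT y ht)

theorem decayNorm_apply_le (hT : ∀ t, 0 ≤ t → ‖T t‖ ≤ M * Real.exp (-ν * t))
    (hTadd : ∀ t s, 0 ≤ t → 0 ≤ s → T (t + s) = (T t).comp (T s)) (x : E) {s : ℝ} (hs : 0 ≤ s) :
    decayNorm T ν (T s x) ≤ Real.exp (-ν * s) * decayNorm T ν x := by
  refine decayNorm_le fun t ht ↦ ?_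
  calc ‖T t (T s x)‖ = ‖T (t + s) x‖ := by rw [hTadd t s ht hs, ContinuousLinearMap.comp_apply]
    _ ≤ decayNorm T ν x * Real.exp (-ν * (t + s)) :=
      norm_apply_le_decayNorm_mul_exp hT x (add_nonneg ht hs)
    _ = Real.exp (-ν * s) * decayNorm T ν x * Real.exp (-ν * t) := by
      rw [mul_add, Real.exp_add]; ring

theorem one_sub_exp_mul_decayNorm_le (hT : ∀ t, 0 ≤ t → ‖T t‖ ≤ M * Real.exp (-ν * t))
    (hTadd : ∀ t s, 0 ≤ t → 0 ≤ s → T (t + s) = (T t).comp (T s)) (x : E) {s : ℝ} (hs : 0 ≤ s) :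
    (1 - Real.exp (-ν * s)) * decayNorm T ν x ≤ decayNorm T ν (x - T s x) := by
  have htriangle := decayNorm_add_le hT (x - T s x) (T s x)
  rw [sub_add_cancel] at htriangle
  linarith [decayNorm_apply_le hT hTadd x hs]

theorem decayNorm_integral_le [CompleteSpace E] {α : Type*} [MeasurableSpace α] {μ : Measure α}
    (hT : ∀ t, 0 ≤ t → ‖T t‖ ≤ M * Real.exp (-ν * t)) {f : α → E} {g : α → ℝ}
    (hf : Integrable f μ) (hg : Integrable g μ) (hfg : ∀ᵐ a ∂μ, decayNorm T ν (f a) ≤ g a) :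
    decayNorm T ν (∫ a, f a ∂μ) ≤ ∫ a, g a ∂μ := by
  refine decayNorm_le fun t ht ↦ ?_
  rw [← ContinuousLinearMap.integral_comp_comm _ hf, ← integral_mul_const]
  refine norm_integral_le_of_norm_le (hg.mul_const _) ?_
  filter_upwards [hfg] with a ha
  exact (norm_apply_le_decayNorm_mul_exp hT (f a) ht).trans (by gcongr)

end DecayNorm

section Convolution

variable {E : Type*} [NormedAddCommGroup E] [NormedSpace ℝ E] {T : ℝ → E →L[ℝ] E} {M ν ω : ℝ}

theorem intervalIntegrable_apply_sub_apply {C : ℝ} (hC : ∀ t, 0 ≤ t → ‖T t‖ ≤ C)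
    (hTcont : ∀ x, ContinuousOn (fun t ↦ T t x) (Set.Ici 0)) {f : ℝ → E} (hf : Continuous f)
    {a t : ℝ} (hat : a ≤ t) : IntervalIntegrable (fun s ↦ T (t - s) (f s)) volume a t := by
  refine ContinuousOn.intervalIntegrable_of_Icc hat ?_
  refine (continuousOn_uncurry_apply_of_norm_le hC hTcont).comp
    (f := fun s ↦ (t - s, f s)) (by fun_prop) fun s hs ↦ ?_
  exact ⟨sub_nonneg.2 hs.2, Set.mem_univ _⟩

theorem integral_exp_neg_mul_sub (hν : ν ≠ 0) (t ω : ℝ) :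
    ∫ s in (t - ω)..t, Real.exp (-ν * (t - s)) = ν⁻¹ * (1 - Real.exp (-ν * ω)) := by
  rw [intervalIntegral.integral_comp_sub_left (fun r ↦ Real.exp (-ν * r)), sub_self, sub_sub_cancel,
    intervalIntegral.integral_comp_mul_left _ (neg_ne_zero.2 hν), integral_exp, smul_eq_mul,
    mul_zero, Real.exp_zero, inv_neg]
  ring

theorem decayNorm_integral_apply_sub_le [CompleteSpace E] (hν : 0 < ν)
    (hT : ∀ t, 0 ≤ t → ‖T t‖ ≤ M * Real.exp (-ν * t))
    (hTadd : ∀ t s, 0 ≤ t → 0 ≤ s → T (t + s) = (T t).comp (T s))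
    (hTcont : ∀ x, ContinuousOn (fun t ↦ T t x) (Set.Ici 0)) (hω : 0 ≤ ω) {f : ℝ → E}
    (hf : Continuous f) {K : ℝ} (hK : ∀ s, decayNorm T ν (f s) ≤ K) (t : ℝ) :
    decayNorm T ν (∫ s in (t - ω)..t, T (t - s) (f s))
      ≤ (1 - Real.exp (-ν * ω)) * (ν⁻¹ * K) := by
  have hM : 0 ≤ M := by simpa using (norm_nonneg _).trans (hT 0 le_rfl)
  have hTM (t : ℝ) (ht : 0 ≤ t) : ‖T t‖ ≤ M := by
    refine (hT t ht).trans (mul_le_of_le_one_right hM (Real.exp_le_one_iff.2 ?_))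
    exact mul_nonpos_of_nonpos_of_nonneg (neg_nonpos.2 hν.le) ht
  have hle : t - ω ≤ t := sub_le_self t hω
  calc decayNorm T ν (∫ s in (t - ω)..t, T (t - s) (f s))
      ≤ ∫ s in (t - ω)..t, Real.exp (-ν * (t - s)) * K := by
        rw [intervalIntegral.integral_of_le hle, intervalIntegral.integral_of_le hle]
        refine decayNorm_integral_le hT (intervalIntegrable_apply_sub_apply hTM hTcont hf hle).1
          (Continuous.integrableOn_Ioc (by fun_prop)) ?_
        refine ae_restrict_of_forall_mem measurableSet_Ioc fun s hs ↦ ?_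
        exact (decayNorm_apply_le hT hTadd (f s) (sub_nonneg.2 hs.2)).trans (by gcongr; exact hK s)
    _ = (1 - Real.exp (-ν * ω)) * (ν⁻¹ * K) := by
        rw [intervalIntegral.integral_mul_const, integral_exp_neg_mul_sub hν.ne']; ring

theorem decayNorm_le_of_sub_apply_eq_integral [CompleteSpace E] (hν : 0 < ν)
    (hT : ∀ t, 0 ≤ t → ‖T t‖ ≤ M * Real.exp (-ν * t))
    (hTadd : ∀ t s, 0 ≤ t → 0 ≤ s → T (t + s) = (T t).comp (T s))
    (hTcont : ∀ x, ContinuousOn (fun t ↦ T t x) (Set.Ici 0)) (hω : 0 < ω) {f : ℝ → E}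
    (hf : Continuous f) {K : ℝ} (hK : ∀ s, decayNorm T ν (f s) ≤ K) {t : ℝ} {u : E}
    (hu : u - T ω u = ∫ s in (t - ω)..t, T (t - s) (f s)) :
    decayNorm T ν u ≤ ν⁻¹ * K := by
  have hgap : 0 < 1 - Real.exp (-ν * ω) :=
    sub_pos.2 (Real.exp_lt_one_iff.2 (mul_neg_of_neg_of_pos (neg_neg_of_pos hν) hω))
  refine le_of_mul_le_mul_left ?_ hgap
  calc (1 - Real.exp (-ν * ω)) * decayNorm T ν u ≤ decayNorm T ν (u - T ω u) :=
        one_sub_exp_mul_decayNorm_le hT hTadd u hω.le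
    _ ≤ (1 - Real.exp (-ν * ω)) * (ν⁻¹ * K) :=
        hu ▸ decayNorm_integral_apply_sub_le hν hT hTadd hTcont hω.le hf hK t

end Convolution

section PeriodicSolutionOperator

variable {E : Type*} [NormedAddCommGroup E] [NormedSpace ℝ E] {T : ℝ → E →L[ℝ] E} {M ν ω : ℝ}
  {P : periodicBCF E ω →L[ℝ] periodicBCF E ω}

/-- `P` is a solution operator for the `ω`-periodic problem of the semigroup `T`. The defining
formula `P h (t) = (I - T(ω))⁻¹ ∫_{t-ω}^t T(t-s) h(s) ds` is multiplied by `I - T(ω)`, so that no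
inverse needs to be supplied. -/
def IsPeriodicSolutionOperator (T : ℝ → E →L[ℝ] E)
    (P : periodicBCF E ω →L[ℝ] periodicBCF E ω) : Prop :=
  ∀ (h : periodicBCF E ω) (t : ℝ),
    (P h : ℝ →ᵇ E) t - T ω ((P h : ℝ →ᵇ E) t)
      = ∫ s in (t - ω)..t, T (t - s) ((h : ℝ →ᵇ E) s)

theorem isPeriodicSolutionOperator_of_rightInverse {S : E →L[ℝ] E}
    (hS : (ContinuousLinearMap.id ℝ E - T ω).comp S = ContinuousLinearMap.id ℝ E)
    (hP : ∀ (h : periodicBCF E ω) (t : ℝ),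
      (P h : ℝ →ᵇ E) t = S (∫ s in (t - ω)..t, T (t - s) ((h : ℝ →ᵇ E) s))) :
    IsPeriodicSolutionOperator T P := fun h t ↦ by
  rw [hP]
  exact DFunLike.congr_fun hS _

theorem IsPeriodicSolutionOperator.decayNorm_pow_apply_le [CompleteSpace E]
    (hP : IsPeriodicSolutionOperator T P) (hν : 0 < ν)
    (hT : ∀ t, 0 ≤ t → ‖T t‖ ≤ M * Real.exp (-ν * t))
    (hTadd : ∀ t s, 0 ≤ t → 0 ≤ s → T (t + s) = (T t).comp (T s))
    (hTcont : ∀ x, ContinuousOn (fun t ↦ T t x) (Set.Ici 0)) (hω : 0 < ω) {h : periodicBCF E ω}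
    {K : ℝ} (hK : ∀ t, decayNorm T ν ((h : ℝ →ᵇ E) t) ≤ K) (n : ℕ) (t : ℝ) :
    decayNorm T ν (((P ^ n) h : ℝ →ᵇ E) t) ≤ ν⁻¹ ^ n * K := by
  induction n generalizing t with
  | zero => simpa using hK t
  | succ n ih =>
    rw [pow_succ' P, pow_succ', mul_assoc]
    exact decayNorm_le_of_sub_apply_eq_integral hν hT hTadd hTcont hω
      ((P ^ n) h : ℝ →ᵇ E).continuous ih (hP ((P ^ n) h) t)

theorem IsPeriodicSolutionOperator.norm_pow_apply_le [CompleteSpace E]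
    (hP : IsPeriodicSolutionOperator T P) (hν : 0 < ν)
    (hT₀ : T 0 = ContinuousLinearMap.id ℝ E)
    (hT : ∀ t, 0 ≤ t → ‖T t‖ ≤ M * Real.exp (-ν * t))
    (hTadd : ∀ t s, 0 ≤ t → 0 ≤ s → T (t + s) = (T t).comp (T s))
    (hTcont : ∀ x, ContinuousOn (fun t ↦ T t x) (Set.Ici 0)) (hω : 0 < ω) (n : ℕ)
    (h : periodicBCF E ω) : ‖(P ^ n) h‖ ≤ M * ν⁻¹ ^ n * ‖h‖ := by
  have hM : 0 ≤ M := by simpa using (norm_nonneg _).trans (hT 0 le_rfl)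
  have hh (t : ℝ) : decayNorm T ν ((h : ℝ →ᵇ E) t) ≤ M * ‖h‖ := by
    refine (decayNorm_le_mul_norm hT _).trans ?_
    gcongr
    exact (h : ℝ →ᵇ E).norm_coe_le_norm t
  refine (BoundedContinuousFunction.norm_le (by positivity)).2 fun t ↦ ?_
  calc ‖((P ^ n) h : ℝ →ᵇ E) t‖ ≤ decayNorm T ν (((P ^ n) h : ℝ →ᵇ E) t) :=
        norm_le_decayNorm hT₀ hT _
    _ ≤ ν⁻¹ ^ n * (M * ‖h‖) := hP.decayNorm_pow_apply_le hν hT hTadd hTcont hω hh n t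
    _ = M * ν⁻¹ ^ n * ‖h‖ := by ring

end PeriodicSolutionOperator

theorem limsup_rpow_inv_le_of_le_mul_pow {u : ℕ → ℝ} {C r : ℝ} (hC : 0 < C) (hr : 0 ≤ r)
    (hu : ∀ᶠ n in atTop, 0 ≤ u n) (hur : ∀ᶠ n in atTop, u n ≤ C * r ^ n) :
    limsup (fun n : ℕ ↦ u n ^ (n : ℝ)⁻¹) atTop ≤ r := by
  have hlim : Tendsto (fun n : ℕ ↦ C ^ (n : ℝ)⁻¹ * r) atTop (𝓝 r) := by
    have hroot := (Real.continuousAt_const_rpow hC.ne').tendsto.comp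
      (tendsto_inv_atTop_nhds_zero_nat (𝕜 := ℝ))
    simpa using hroot.mul_const r
  have hroot_le : ∀ᶠ n : ℕ in atTop, u n ^ (n : ℝ)⁻¹ ≤ C ^ (n : ℝ)⁻¹ * r := by
    filter_upwards [hu, hur, eventually_ne_atTop 0] with n hun hurn hn
    calc u n ^ (n : ℝ)⁻¹ ≤ (C * r ^ n) ^ (n : ℝ)⁻¹ := by gcongr
      _ = C ^ (n : ℝ)⁻¹ * r := by
        rw [Real.mul_rpow hC.le (pow_nonneg hr n), Real.pow_rpow_inv_natCast hr hn]
  have hroot_nonneg : ∀ᶠ n : ℕ in atTop, 0 ≤ u n ^ (n : ℝ)⁻¹ :=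
    hu.mono fun _ hun ↦ Real.rpow_nonneg hun _
  calc limsup (fun n : ℕ ↦ u n ^ (n : ℝ)⁻¹) atTop
      ≤ limsup (fun n : ℕ ↦ C ^ (n : ℝ)⁻¹ * r) atTop :=
        limsup_le_limsup hroot_le (IsCoboundedUnder.of_frequently_ge hroot_nonneg.frequently)
          hlim.isBoundedUnder_le
    _ = r := hlim.limsup_eq

/-- **Lemma 2.1, spectral radius bound.** The periodic solution
operator `P` on `C_ω(ℝ, E)` satisfies `‖Pⁿ h‖_C ≤ M ν⁻ⁿ ‖h‖_C` for all `n ≥ 1`,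
and consequently `limsup_{n → ∞} ‖Pⁿ‖^{1/n} ≤ 1/ν`, i.e. the spectral radius
of `P` is at most `1/ν`. -/
theorem stmt4
    {E : Type*} [NormedAddCommGroup E] [NormedSpace ℝ E] [CompleteSpace E]
    (T : ℝ → E →L[ℝ] E) (M ν : ℝ) (hM : 1 ≤ M) (hν : 0 < ν)
    (hT0 : T 0 = ContinuousLinearMap.id ℝ E)
    (hTsemi : ∀ t s : ℝ, 0 ≤ t → 0 ≤ s → T (t + s) = (T t).comp (T s))
    (hTcont : ∀ x : E, ContinuousOn (fun t : ℝ => T t x) (Set.Ici (0 : ℝ)))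
    (hTnorm : ∀ t : ℝ, 0 ≤ t → ‖T t‖ ≤ M * Real.exp (-ν * t))
    (ω : ℝ) (hω : 0 < ω)
    -- `S = (I - T ω)⁻¹`:
    (S : E →L[ℝ] E)
    (hS₁ : (ContinuousLinearMap.id ℝ E - T ω).comp S = ContinuousLinearMap.id ℝ E)
    (hS₂ : S.comp (ContinuousLinearMap.id ℝ E - T ω) = ContinuousLinearMap.id ℝ E)
    -- `P` is the periodic solution operator on `C_ω(ℝ, E)`:
    (P : periodicBCF E ω →L[ℝ] periodicBCF E ω)
    (hP : ∀ h : periodicBCF E ω, ∀ t : ℝ,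
      ((P h : BoundedContinuousFunction ℝ E) t)
        = S (∫ s in (t - ω)..t, T (t - s) ((h : BoundedContinuousFunction ℝ E) s))) :
    (∀ n : ℕ, 1 ≤ n → ∀ h : periodicBCF E ω, ‖(P ^ n) h‖ ≤ M * ν⁻¹ ^ n * ‖h‖) ∧
    Filter.limsup (fun n : ℕ => ‖P ^ n‖ ^ ((n : ℝ)⁻¹)) Filter.atTop ≤ 1 / ν := by
  have hP' : IsPeriodicSolutionOperator T P := isPeriodicSolutionOperator_of_rightInverse hS₁ hP
  have hpow (n : ℕ) (h : periodicBCF E ω) : ‖(P ^ n) h‖ ≤ M * ν⁻¹ ^ n * ‖h‖ :=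
    hP'.norm_pow_apply_le hν hT0 hTnorm hTsemi hTcont hω n h
  have hopNorm (n : ℕ) : ‖P ^ n‖ ≤ M * ν⁻¹ ^ n :=
    (P ^ n).opNorm_le_bound (by positivity) (hpow n)
  refine ⟨fun n _ ↦ hpow n, ?_⟩
  rw [one_div]
  exact limsup_rpow_inv_le_of_le_mul_pow (by positivity) (by positivity)
    (.of_forall fun n ↦ norm_nonneg (P ^ n)) (.of_forall hopNorm)
end

section
/- (Theorem 1.1) Let E be a real ordered Banach space whose positive cone K is closed and normal, and let T(t) (t ≥ 0) be a positive compact C₀-semigroup on E satisfying ‖T(t)‖ ≤ M e^{−ν t} for all t ≥ 0 with constants M ≥ 1 and ν > 0. Let ω > 0, τ > 0, and let F : ℝ × K × K → K be continuous with F(t + ω, x, y) = F(t, x, y) for all t, x, y. Assume (H1): there exist constants C₁, C₂ > 0 with C₁ + C₂ < ν and a continuous ω-periodic function h₀ : ℝ → K such that F(t, x, y) ≤ C₁ x + C₂ y + h₀(t) for all t ∈ ℝ and x, y ∈ K. Then the delay evolution equation u'(t) + A u(t) = F(t, u(t), u(t − τ)) (t ∈ ℝ) has at least one positive ω-periodic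 mild solution. -/
open Set Metric MeasureTheory Filter Topology Polynomial
open scoped NNReal

/-!
The operator `Q h t = ∫ s in (0, ∞), T s (h (t - s))` sends an `ω`-periodic `h` to the `ω`-periodic
mild solution of `u' + A u = h`, so the solutions sought are the fixed points of
`v ↦ Q (F (·, v, v (· - τ)))`. `Q` is positive, and is compact because `T t` is, for `t > 0`. With
`D v = C₁ v + C₂ v (· - τ)`, the decay of `T` gives `‖(Q D)ⁿ Q h₀‖ = O(((C₁ + C₂) / ν)ⁿ)`, so that
`w = ∑ (Q D)ⁿ Q h₀` converges and solves `w = Q (D w + h₀)`. By positivity and (H1) the order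
interval `[0, w]` is mapped into itself, with relatively compact image since normality makes
`[0, D w + h₀]` bounded, and Schauder's fixed point theorem applies.

Schauder's theorem reduces to Brouwer's by partitions of unity. For Brouwer's, let `g` be smooth,
supported in a compact set `s`, and consider `∫ x in s, φ (x + t g x) det (1 + t g' x)`. For
polynomial `φ` this is a polynomial in `t`, and by change of variables it is constant for small `t`,
hence equal to `∫ x in s, φ x` at `t = 1`; this is impossible for a suitable `φ` if `x + g x` omits
the value `0`.
-/

/-! ### Brouwer's fixed point theorem -/

theorem exists_eval_one_eq_sum (m : ℕ) {δ : ℝ} (hδ : 0 < δ) :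
    ∃ c t : ℕ → ℝ, (∀ i, t i ∈ Ioo 0 δ) ∧ ∀ P : ℝ[X], P.natDegree ≤ m →
      P.eval 1 = ∑ i ∈ Finset.range (m + 1), c i * P.eval (t i) := by
  let t : ℕ → ℝ := fun i ↦ δ * (i + 2 : ℝ)⁻¹
  have ht : Function.Injective t := fun i j h ↦ by
    have h' := add_right_cancel (inv_injective (mul_left_cancel₀ hδ.ne' h))
    exact_mod_cast h'
  have hmem (i : ℕ) : t i ∈ Ioo 0 δ :=
    ⟨by positivity, mul_lt_of_lt_one_right hδ
      (inv_lt_one_of_one_lt₀ (by linarith [i.cast_nonneg (α := ℝ)]))⟩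
  refine ⟨fun i ↦ (Lagrange.basis (Finset.range (m + 1)) t i).eval 1, t, hmem, fun P hP ↦ ?_⟩
  have hdeg : P.degree < (Finset.range (m + 1)).card := by
    rw [Finset.card_range]
    exact P.degree_le_natDegree.trans_lt (mod_cast Nat.lt_succ_of_le hP)
  conv_lhs => rw [Lagrange.eq_interpolate ht.injOn hdeg, Lagrange.interpolate_apply]
  simp only [eval_finsetSum, eval_mul, eval_C, mul_comm]

theorem exists_polynomial_eval_eq_det_id_add_smul {R V : Type*} [CommRing R] [Nontrivial R]
    [AddCommGroup V] [Module R V] [Module.Free R V] [Module.Finite R V] (f : V →ₗ[R] V) :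
    ∃ P : R[X], P.natDegree ≤ Module.finrank R V ∧
      ∀ t, P.eval t = LinearMap.det (LinearMap.id + t • f) := by
  classical
  let b := Module.finBasis R V
  let A := LinearMap.toMatrix b b f
  let P : R[X] := ((X : R[X]) • A.map C + (1 : Matrix (Fin _) (Fin _) R).map C).det
  have hP : P.natDegree ≤ Module.finrank R V :=
    (natDegree_det_X_add_C_le A 1).trans_eq (Fintype.card_fin _)
  have heval (t : R) : P.eval t = (t • A + 1).det := by
    rw [← coe_evalRingHom, RingHom.map_det]
    congr 1
    ext i j
    rcases eq_or_ne i j with rfl | hij <;> simp [*, mul_comm t]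
  refine ⟨P, hP, fun t ↦ ?_⟩
  rw [heval, ← LinearMap.det_toMatrix b, map_add, map_smul, LinearMap.toMatrix_id, add_comm]

theorem exists_polynomial_eval_eq_sub_norm_sq_pow {V : Type*} [NormedAddCommGroup V]
    [InnerProductSpace ℝ V] (r : ℝ) (k : ℕ) (x y : V) :
    ∃ P : ℝ[X], P.natDegree ≤ k * 2 ∧ ∀ t, P.eval t = (r - ‖x + t • y‖ ^ 2) ^ k := by
  refine ⟨(C (r - ‖x‖ ^ 2) - C (2 * inner ℝ x y) * X - C (‖y‖ ^ 2) * X ^ 2) ^ k,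
    natDegree_pow_le_of_le k (by compute_degree), fun t ↦ ?_⟩
  rw [norm_add_sq_real, inner_smul_right, norm_smul, mul_pow, Real.norm_eq_abs, sq_abs]
  simp only [eval_pow, eval_sub, eval_mul, eval_C, eval_X]
  ring

theorem bijective_id_add_of_lipschitzWith {V : Type*} [NormedAddCommGroup V] [NormedSpace ℝ V]
    [CompleteSpace V] {g : V → V} {K : ℝ≥0} (hg : LipschitzWith K g) (hK : K < 1) :
    Function.Bijective fun x ↦ x + g x := by
  have happrox : ApproximatesLinearOn (fun x ↦ x + g x)
      (ContinuousLinearEquiv.refl ℝ V : V →L[ℝ] V) univ K := by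
    rw [ApproximatesLinearOn.approximatesLinearOn_iff_lipschitzOnWith, lipschitzOnWith_univ]
    convert hg using 1
    ext x
    simp
  have hN : Subsingleton V ∨ K < ‖((ContinuousLinearEquiv.refl ℝ V).symm : V →L[ℝ] V)‖₊⁻¹ := by
    refine (subsingleton_or_nontrivial V).imp_right fun hV : Nontrivial V ↦ ?_
    have hid : ‖ContinuousLinearMap.id ℝ V‖₊ = 1 := ContinuousLinearMap.nnnorm_id
    rwa [ContinuousLinearEquiv.refl_symm, ContinuousLinearEquiv.coe_refl, hid, inv_one]
  exact (happrox.toHomeomorph _ hN).bijective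

theorem image_eq_self_of_bijective {α : Type*} {f : α → α} {s : Set α}
    (hf : Function.Bijective f) (hfs : EqOn f id sᶜ) : f '' s = s := by
  rw [← compl_inj_iff, ← image_compl_eq hf, hfs.image_eq, image_id]

theorem eventually_det_id_add_pos {V : Type*} [NormedAddCommGroup V] [NormedSpace ℝ V] :
    ∀ᶠ A : V →L[ℝ] V in 𝓝 0, 0 < (ContinuousLinearMap.id ℝ V + A).det := by
  have hcont : Continuous fun A : V →L[ℝ] V ↦ (ContinuousLinearMap.id ℝ V + A).det :=
    ContinuousLinearMap.continuous_det.comp (continuous_const.add continuous_id)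
  exact hcont.continuousAt.eventually (lt_mem_nhds <| by simp [ContinuousLinearMap.det])

section DegreeFormula

variable {V : Type*} [NormedAddCommGroup V] [NormedSpace ℝ V] [FiniteDimensional ℝ V]
  [MeasurableSpace V] [BorelSpace V] {μ : Measure V} [μ.IsAddHaarMeasure]
  {g : V → V} {s : Set V}

theorem setIntegral_comp_id_add_mul_det_of_lipschitzWith {K : ℝ≥0} (hg : Differentiable ℝ g)
    (hgK : LipschitzWith K g) (hK : K < 1)
    (hdet : ∀ x, 0 < (ContinuousLinearMap.id ℝ V + fderiv ℝ g x).det) (hs : MeasurableSet s)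
    (hgs : Function.support g ⊆ s) (φ : V → ℝ) :
    ∫ x in s, φ (x + g x) * (ContinuousLinearMap.id ℝ V + fderiv ℝ g x).det ∂μ =
      ∫ x in s, φ x ∂μ := by
  have hbij := bijective_id_add_of_lipschitzWith hgK hK
  have himage : (fun x ↦ x + g x) '' s = s := image_eq_self_of_bijective hbij fun x hx ↦ by
    simp [Function.notMem_support.mp fun h ↦ hx (hgs h)]
  have hderiv (x : V) : HasFDerivAt (fun x ↦ x + g x)
      (ContinuousLinearMap.id ℝ V + fderiv ℝ g x) x := (hasFDerivAt_id x).add (hg x).hasFDerivAt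
  have hchange := integral_image_eq_integral_abs_det_fderiv_smul μ hs
    (fun x _ ↦ (hderiv x).hasFDerivWithinAt) hbij.injective.injOn φ
  rw [himage] at hchange
  simp only [hchange, abs_of_pos (hdet _), smul_eq_mul, mul_comm]

theorem eventually_setIntegral_comp_id_add_smul_mul_det (hg : ContDiff ℝ 1 g)
    (hgc : HasCompactSupport g) (hs : MeasurableSet s) (hgs : Function.support g ⊆ s)
    (φ : V → ℝ) :
    ∀ᶠ t : ℝ in 𝓝 0, ∫ x in s, φ (x + t • g x) *
      (ContinuousLinearMap.id ℝ V + t • fderiv ℝ g x).det ∂μ = ∫ x in s, φ x ∂μ := by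
  obtain ⟨K, hK⟩ := hg.lipschitzWith_of_hasCompactSupport hgc one_ne_zero
  have hLip : ∀ᶠ t : ℝ in 𝓝 0, ‖t‖₊ * K < 1 := by
    have hcont : Continuous fun t : ℝ ↦ ‖t‖₊ * K := by fun_prop
    exact hcont.continuousAt.eventually (gt_mem_nhds (by simp))
  have hdet : ∀ᶠ t : ℝ in 𝓝 0, ∀ x,
      0 < (ContinuousLinearMap.id ℝ V + t • fderiv ℝ g x).det := by
    obtain ⟨ε, hε, hpos⟩ := Metric.eventually_nhds_iff_ball.mp (eventually_det_id_add_pos (V := V))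
    have hcont : Continuous fun t : ℝ ↦ ‖t‖ * K := by fun_prop
    filter_upwards [hcont.continuousAt.eventually (gt_mem_nhds (by simpa using hε))] with t ht x
    refine hpos _ (mem_ball_zero_iff.mpr (lt_of_le_of_lt ?_ ht))
    rw [norm_smul]
    gcongr
    exact norm_fderiv_le_of_lipschitz ℝ hK
  filter_upwards [hLip, hdet] with t ht htdet
  have hd := hg.differentiable one_ne_zero
  have hfderiv (x : V) : fderiv ℝ (t • g) x = t • fderiv ℝ g x := fderiv_const_smul (hd x) t
  have hformula := setIntegral_comp_id_add_mul_det_of_lipschitzWith (μ := μ) (g := t • g) (s := s)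
    (hd.const_smul t) ((lipschitzWith_smul t).comp hK) ht (by simpa only [hfderiv] using htdet) hs
    ((Function.support_const_smul_subset t g).trans hgs) φ
  simpa only [hfderiv, Pi.smul_apply] using hformula

/- Both sides are values of a polynomial in `t`, at `t = 1` and near `t = 0`. -/
theorem setIntegral_comp_id_add_mul_det (hg : ContDiff ℝ 1 g) (hs : IsCompact s)
    (hgs : Function.support g ⊆ s) {φ : V → ℝ} (hφ : Continuous φ) {m : ℕ}
    (hpoly : ∀ x y, ∃ P : ℝ[X], P.natDegree ≤ m ∧ ∀ t, P.eval t = φ (x + t • y)) :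
    ∫ x in s, φ (x + g x) * (ContinuousLinearMap.id ℝ V + fderiv ℝ g x).det ∂μ =
      ∫ x in s, φ x ∂μ := by
  let q (t : ℝ) (x : V) : ℝ :=
    φ (x + t • g x) * (ContinuousLinearMap.id ℝ V + t • fderiv ℝ g x).det
  have hgc : HasCompactSupport g := .of_support_subset_isCompact hs hgs
  obtain ⟨δ, hδ, hsmall⟩ := Metric.eventually_nhds_iff_ball.mp
    (eventually_setIntegral_comp_id_add_smul_mul_det (μ := μ) hg hgc hs.measurableSet hgs φ)
  obtain ⟨c, t, ht, hquad⟩ := exists_eval_one_eq_sum (m + Module.finrank ℝ V) hδ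
  have hq (x : V) : q 1 x = ∑ i ∈ Finset.range (m + Module.finrank ℝ V + 1), c i * q (t i) x := by
    obtain ⟨P, hPdeg, hP⟩ := hpoly x (g x)
    obtain ⟨D, hDdeg, hD⟩ := exists_polynomial_eval_eq_det_id_add_smul (fderiv ℝ g x).toLinearMap
    have hPD (r : ℝ) : (P * D).eval r = q r x := by
      rw [eval_mul, hP, hD]
      rfl
    simpa only [hPD] using hquad (P * D) (natDegree_mul_le_of_le hPdeg hDdeg)
  have hsum : ∑ i ∈ Finset.range (m + Module.finrank ℝ V + 1), c i = 1 := by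
    simpa using (hquad 1 (by simp)).symm
  have hint (r : ℝ) : IntegrableOn (q r) s μ := by
    have hdet : Continuous fun x ↦ (ContinuousLinearMap.id ℝ V + r • fderiv ℝ g x).det :=
      ContinuousLinearMap.continuous_det.comp
        (continuous_const.add ((hg.continuous_fderiv one_ne_zero).const_smul r))
    exact ((hφ.comp (continuous_id.add (hg.continuous.const_smul r))).mul
      hdet).continuousOn.integrableOn_compact hs
  calc ∫ x in s, φ (x + g x) * (ContinuousLinearMap.id ℝ V + fderiv ℝ g x).det ∂μ
      = ∫ x in s, q 1 x ∂μ := by simp only [q, one_smul]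
    _ = ∑ i ∈ Finset.range (m + Module.finrank ℝ V + 1), c i * ∫ x in s, q (t i) x ∂μ := by
        simp only [hq, ← integral_const_mul]
        exact integral_finsetSum _ fun i _ ↦ (hint (t i)).const_mul (c i)
    _ = ∑ i ∈ Finset.range (m + Module.finrank ℝ V + 1), c i * ∫ x in s, φ x ∂μ := by
        refine Finset.sum_congr rfl fun i _ ↦ congrArg (c i * ·) (hsmall (t i) ?_)
        rw [mem_ball_zero_iff, Real.norm_of_nonneg (ht i).1.le]
        exact (ht i).2
    _ = ∫ x in s, φ x ∂μ := by rw [← Finset.sum_mul, hsum, one_mul]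

end DegreeFormula

theorem le_of_forall_setIntegral_pow_le {X : Type*} [TopologicalSpace X] [T2Space X]
    [MeasurableSpace X] [BorelSpace X] {μ : Measure X} [μ.IsOpenPosMeasure]
    [IsFiniteMeasureOnCompacts μ] {s : Set X} (hs : IsCompact s) {p : X → ℝ} (hp : Continuous p)
    (hp₀ : ∀ x ∈ s, 0 ≤ p x) {C a : ℝ} (ha : 0 ≤ a)
    (h : ∀ k : ℕ, ∫ x in s, p x ^ k ∂μ ≤ C * a ^ k) {x : X} (hx : x ∈ interior s) :
    p x ≤ a := by
  by_contra! hax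
  obtain ⟨b, hab, hbx⟩ := exists_between hax
  have hb : 0 < b := ha.trans_lt hab
  let U : Set X := interior s ∩ p ⁻¹' Ioi b
  have hU : IsOpen U := isOpen_interior.inter (isOpen_Ioi.preimage hp)
  have hUs : U ⊆ s := inter_subset_left.trans interior_subset
  have hUfin : μ U ≠ ⊤ := ((measure_mono hUs).trans_lt hs.measure_lt_top).ne
  have hUpos : 0 < μ.real U := ENNReal.toReal_pos (hU.measure_pos μ ⟨x, hx, hbx⟩).ne' hUfin
  have hlower (k : ℕ) : μ.real U * b ^ k ≤ C * a ^ k := by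
    have hint : IntegrableOn (fun y ↦ p y ^ k) s μ :=
      (hp.pow k).continuousOn.integrableOn_compact hs
    calc μ.real U * b ^ k = ∫ _ in U, b ^ k ∂μ := by rw [setIntegral_const, smul_eq_mul]
      _ ≤ ∫ y in U, p y ^ k ∂μ :=
          setIntegral_mono_on (integrableOn_const hUfin) (hint.mono_set hUs) hU.measurableSet
            fun y hy ↦ pow_le_pow_left₀ hb.le hy.2.le k
      _ ≤ ∫ y in s, p y ^ k ∂μ :=
          setIntegral_mono_set hint
            ((ae_restrict_mem hs.measurableSet).mono fun y hy ↦ pow_nonneg (hp₀ y hy) k)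
            hUs.eventuallyLE
      _ ≤ C * a ^ k := h k
  have hlim : Tendsto (fun k : ℕ ↦ C * (a / b) ^ k) atTop (𝓝 (C * 0)) :=
    (tendsto_pow_atTop_nhds_zero_of_lt_one (by positivity) ((div_lt_one hb).mpr hab)).const_mul C
  have hle : μ.real U ≤ C * 0 := ge_of_tendsto' hlim fun k ↦ by
    rw [div_pow, ← mul_div_assoc, le_div_iff₀ (pow_pos hb k)]
    exact hlower k
  linarith

section Brouwer

variable {V : Type*} [NormedAddCommGroup V] [InnerProductSpace ℝ V] [FiniteDimensional ℝ V]

/- If `id + g` omitted `0`, the Landau kernels `y ↦ (r ^ 2 - ‖y‖ ^ 2) ^ k` would concentrate in a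
ball that the left-hand side of the degree formula does not see. -/
theorem exists_add_eq_zero_of_hasCompactSupport {g : V → V} (hg : ContDiff ℝ 1 g)
    (hgc : HasCompactSupport g) : ∃ x, x + g x = 0 := by
  by_contra! hne
  borelize V
  obtain ⟨R, hR, hgR⟩ := hgc.isCompact.isBounded.subset_closedBall_lt 0 0
  have hs : IsCompact (closedBall (0 : V) R) := isCompact_closedBall 0 R
  have h0 : (0 : V) ∈ closedBall 0 R := mem_closedBall_self hR.le
  have hΦ : Continuous fun x ↦ x + g x := continuous_id.add hg.continuous
  obtain ⟨z, -, hz⟩ := hs.exists_isMinOn ⟨0, h0⟩ hΦ.norm.continuousOn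
  obtain ⟨B, hB⟩ := hs.exists_bound_of_continuousOn hΦ.continuousOn
  obtain ⟨D, hD⟩ := hs.exists_bound_of_continuousOn
    (f := fun x ↦ (ContinuousLinearMap.id ℝ V + fderiv ℝ g x).det)
    (ContinuousLinearMap.continuous_det.comp
      (continuous_const.add (hg.continuous_fderiv one_ne_zero))).continuousOn
  set r := max R B
  set a := r ^ 2 - ‖z + g z‖ ^ 2
  have hΦa (x) (hx : x ∈ closedBall (0 : V) R) :
      0 ≤ r ^ 2 - ‖x + g x‖ ^ 2 ∧ r ^ 2 - ‖x + g x‖ ^ 2 ≤ a :=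
    ⟨sub_nonneg.mpr (by gcongr; exact (hB x hx).trans (le_max_right _ _)),
      sub_le_sub_left (by gcongr; exact hz hx) _⟩
  have ha : 0 ≤ a := (hΦa 0 h0).1.trans (hΦa 0 h0).2
  have hbound (k : ℕ) : ∫ x in closedBall (0 : V) R, (r ^ 2 - ‖x‖ ^ 2) ^ k ≤
      D * volume.real (closedBall (0 : V) R) * a ^ k := by
    rw [← setIntegral_comp_id_add_mul_det hg hs ((subset_tsupport g).trans hgR) (by fun_prop)
      (exists_polynomial_eval_eq_sub_norm_sq_pow (r ^ 2) k), mul_right_comm, mul_comm D]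
    refine (Real.le_norm_self _).trans (norm_setIntegral_le_of_norm_le_const hs.measure_lt_top
      fun x hx ↦ ?_)
    rw [norm_mul, norm_pow, Real.norm_of_nonneg (hΦa x hx).1]
    exact mul_le_mul (pow_le_pow_left₀ (hΦa x hx).1 (hΦa x hx).2 k) (hD x hx) (norm_nonneg _)
      (pow_nonneg ha k)
  have hzero := le_of_forall_setIntegral_pow_le hs (p := fun x : V ↦ r ^ 2 - ‖x‖ ^ 2) (by fun_prop)
    (fun x hx ↦ sub_nonneg.mpr (by
      gcongr; exact (mem_closedBall_zero_iff.mp hx).trans (le_max_left _ _))) ha hbound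
    (ball_subset_interior_closedBall (mem_ball_self hR))
  have hpos : 0 < ‖z + g z‖ := norm_pos_iff.mpr (hne z)
  simp only [norm_zero, a] at hzero
  nlinarith

theorem exists_fixedPoint_of_forall_exists_dist_lt {X : Type*} [PseudoMetricSpace X] [T2Space X]
    {f : X → X} {s k : Set X} (hs : IsClosed s) (hf : ContinuousOn f s) (hk : IsCompact k)
    (hfk : MapsTo f s k) (happrox : ∀ ε > 0, ∃ x ∈ s, dist (f x) x < ε) :
    ∃ x ∈ s, f x = x := by
  have hpos (n : ℕ) : 0 < (1 : ℝ) / (n + 1) := Nat.one_div_pos_of_nat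
  choose x hxs hx using fun n : ℕ ↦ happrox _ (hpos n)
  obtain ⟨y, -, θ, hθ, hy⟩ := hk.tendsto_subseq fun n ↦ hfk (hxs n)
  have hdist : Tendsto (fun n ↦ dist (f (x (θ n))) (x (θ n))) atTop (𝓝 0) :=
    squeeze_zero (fun _ ↦ dist_nonneg) (fun n ↦ (hx (θ n)).le)
      (tendsto_one_div_add_atTop_nhds_zero_nat.comp hθ.tendsto_atTop)
  have hxy : Tendsto (x ∘ θ) atTop (𝓝 y) := tendsto_of_tendsto_of_dist hy hdist
  have hys : y ∈ s := hs.mem_of_tendsto hxy (Eventually.of_forall fun n ↦ hxs (θ n))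
  refine ⟨y, hys, tendsto_nhds_unique ?_ hy⟩
  exact (hf y hys).tendsto.comp (tendsto_nhdsWithin_iff.mpr
    ⟨hxy, Eventually.of_forall fun n ↦ hxs (θ n)⟩)

theorem exists_fixedPoint_of_contDiff {h : V → V} (hh : ContDiff ℝ 1 h) {R : ℝ} (hR : 0 < R)
    (hhR : ∀ x, ‖h x‖ ≤ R) : ∃ x, h x = x := by
  let χ : ContDiffBump (0 : V) := ⟨R, R + 1, hR, lt_add_one R⟩
  obtain ⟨x, hx⟩ := exists_add_eq_zero_of_hasCompactSupport (g := fun x ↦ χ x • -h x)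
    (χ.contDiff.smul hh.neg) χ.hasCompactSupport.smul_right
  have hx' : x = χ x • h x := by rwa [smul_neg, add_neg_eq_zero] at hx
  have hxR : x ∈ closedBall 0 R := by
    rw [mem_closedBall_zero_iff, hx', norm_smul, Real.norm_of_nonneg χ.nonneg]
    exact (mul_le_of_le_one_left (norm_nonneg _) χ.le_one).trans (hhR x)
  exact ⟨x, by rw [χ.one_of_mem_closedBall hxR, one_smul] at hx'; exact hx'.symm⟩

theorem exists_fixedPoint_of_isBounded_range {f : V → V} (hf : Continuous f)
    (hb : Bornology.IsBounded (range f)) : ∃ x, f x = x := by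
  obtain ⟨R, hR, hfR⟩ := hb.subset_closedBall_lt 0 0
  have hfR' (x : V) : ‖f x‖ ≤ R := mem_closedBall_zero_iff.mp (hfR (mem_range_self x))
  obtain ⟨x, -, hx⟩ := exists_fixedPoint_of_forall_exists_dist_lt isClosed_univ hf.continuousOn
    (isCompact_closedBall 0 R) (fun x _ ↦ hfR (mem_range_self x)) fun ε hε ↦ by
      obtain ⟨h, hh, hfh, -⟩ := hf.exists_contDiff_approx 1 (ε := fun _ ↦ ε) continuous_const
        fun _ ↦ hε
      obtain ⟨x, hx⟩ := exists_fixedPoint_of_contDiff hh (add_pos hR hε) fun x ↦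
        calc ‖h x‖ ≤ ‖f x‖ + ‖h x - f x‖ := norm_le_norm_add_norm_sub' _ _
          _ ≤ R + ε := add_le_add (hfR' x) (by rw [← dist_eq_norm]; exact (hfh x).le)
      exact ⟨x, mem_univ x, by simpa only [hx, dist_comm] using hfh x⟩
  exact ⟨x, hx⟩

theorem exists_lipschitzWith_retraction {H : Type*} [NormedAddCommGroup H] [InnerProductSpace ℝ H]
    {s : Set H} (hne : s.Nonempty) (hcomplete : IsComplete s) (hconv : Convex ℝ s) :
    ∃ p : H → H, LipschitzWith 1 p ∧ (∀ x, p x ∈ s) ∧ ∀ x ∈ s, p x = x := by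
  choose p hps hp using exists_norm_eq_iInf_of_complete_convex hne hcomplete hconv
  have hangle (x : H) {y : H} (hy : y ∈ s) : inner ℝ (x - p x) (y - p x) ≤ 0 :=
    (norm_eq_iInf_iff_real_inner_le_zero hconv (hps x)).mp (hp x) y hy
  refine ⟨p, .of_dist_le_mul fun x y ↦ ?_, hps, fun x hx ↦ ?_⟩
  · rw [NNReal.coe_one, one_mul, dist_eq_norm, dist_eq_norm]
    have hsq : ‖p x - p y‖ ^ 2 ≤ inner ℝ (x - y) (p x - p y) := by
      have hx := hangle x (hps y)
      have hy := hangle y (hps x)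
      rw [← real_inner_self_eq_norm_sq]
      simp only [inner_sub_left, inner_sub_right] at hx hy ⊢
      linarith
    have hcs := real_inner_le_norm (x - y) (p x - p y)
    by_contra! hlt
    nlinarith [norm_nonneg (x - y)]
  · have h := hangle x hx
    rw [real_inner_self_nonpos, sub_eq_zero] at h
    exact h.symm

theorem exists_fixedPoint_of_convex_isCompact_of_innerProductSpace {s : Set V} (hne : s.Nonempty)
    (hs : IsCompact s) (hconv : Convex ℝ s) {f : V → V} (hf : ContinuousOn f s)
    (hfs : MapsTo f s s) : ∃ x ∈ s, f x = x := by
  obtain ⟨p, hp, hps, hfix⟩ := exists_lipschitzWith_retraction hne hs.isComplete hconv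
  obtain ⟨x, hx⟩ := exists_fixedPoint_of_isBounded_range (hf.comp_continuous hp.continuous hps)
    (hs.isBounded.subset (range_subset_iff.mpr fun x ↦ hfs (hps x)))
  have hxs : x ∈ s := hx ▸ hfs (hps x)
  exact ⟨x, hxs, by rwa [Function.comp_apply, hfix x hxs] at hx⟩

end Brouwer

theorem exists_fixedPoint_of_convex_isCompact {V : Type*} [AddCommGroup V] [Module ℝ V]
    [TopologicalSpace V] [IsTopologicalAddGroup V] [ContinuousSMul ℝ V] [T2Space V]
    [FiniteDimensional ℝ V] {s : Set V} (hne : s.Nonempty) (hs : IsCompact s) (hconv : Convex ℝ s)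
    {f : V → V} (hf : ContinuousOn f s) (hfs : MapsTo f s s) : ∃ x ∈ s, f x = x := by
  let e : V ≃L[ℝ] EuclideanSpace ℝ (Fin (Module.finrank ℝ V)) := toEuclidean
  have hes : MapsTo e.symm (e '' s) s := by
    rintro _ ⟨x, hx, rfl⟩
    rwa [e.symm_apply_apply]
  obtain ⟨_, ⟨x, hx, rfl⟩, hfix⟩ := exists_fixedPoint_of_convex_isCompact_of_innerProductSpace
    (f := e ∘ f ∘ e.symm) (hne.image e) (hs.image e.continuous)
    (hconv.is_linear_image e.toLinearMap.isLinear)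
    (e.continuous.comp_continuousOn (hf.comp e.symm.continuous.continuousOn hes))
    fun z hz ↦ mem_image_of_mem e (hfs (hes hz))
  exact ⟨x, hx, by simpa using hfix⟩

/-! ### Schauder's fixed point theorem -/

section Schauder

variable {E : Type*} [NormedAddCommGroup E] [NormedSpace ℝ E]

theorem exists_stdSimplex_approx {k : Set E} (hk : IsCompact k) {ε : ℝ} (hε : 0 < ε) :
    ∃ (t : Set E) (_ : Fintype t) (ρ : E → t → ℝ), t ⊆ k ∧ Continuous ρ ∧
      (∀ x ∈ k, ρ x ∈ stdSimplex ℝ t) ∧ ∀ x ∈ k, dist (∑ y, ρ x y • (y : E)) x < ε := by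
  obtain ⟨t, htk, ht, hcover⟩ := finite_cover_balls_of_compact hk hε
  have : Fintype t := ht.fintype
  obtain ⟨ρ, hρ⟩ := PartitionOfUnity.exists_isSubordinate_of_locallyFinite hk.isClosed
    (fun y : t ↦ ball (y : E) ε) (fun _ ↦ isOpen_ball) (locallyFinite_of_finite _)
    (by rwa [biUnion_eq_iUnion] at hcover)
  refine ⟨t, this, fun x y ↦ ρ y x, htk, continuous_pi fun y ↦ (ρ y).continuous,
    fun x hx ↦ ⟨fun y ↦ ρ.nonneg y x, ?_⟩, fun x hx ↦ ?_⟩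
  · rw [← ρ.sum_eq_one hx, finsum_eq_sum_of_fintype]
  · rw [← mem_ball, ← finsum_eq_sum_of_fintype]
    refine ρ.finsum_smul_mem_convex (g := fun y _ ↦ (y : E)) hx (fun y hy ↦ ?_) (convex_ball x ε)
    exact mem_ball'.mpr (hρ y (subset_tsupport _ hy))

theorem exists_fixedPoint_of_isCompact_closure_image {s : Set E} (hne : s.Nonempty)
    (hs : IsClosed s) (hconv : Convex ℝ s) {f : E → E} (hf : ContinuousOn f s)
    (hfs : MapsTo f s s) (hcomp : IsCompact (closure (f '' s))) : ∃ x ∈ s, f x = x := by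
  have hfk : MapsTo f s (closure (f '' s)) := fun x hx ↦ subset_closure (mem_image_of_mem f hx)
  have hks : closure (f '' s) ⊆ s := closure_minimal hfs.image_subset hs
  refine exists_fixedPoint_of_forall_exists_dist_lt hs hf hcomp hfk fun ε hε ↦ ?_
  obtain ⟨t, _, ρ, htk, hρ, hsimplex, hdist⟩ := exists_stdSimplex_approx hcomp hε
  let Λ (a : t → ℝ) : E := ∑ y, a y • (y : E)
  have hΛ : Continuous Λ := by fun_prop
  have hΛs : MapsTo Λ (stdSimplex ℝ t) s := fun a ha ↦
    hconv.sum_mem (fun y _ ↦ ha.1 y) ha.2 fun y _ ↦ hks (htk y.2)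
  obtain ⟨x₀, hx₀⟩ := hne
  obtain ⟨a, ha, hfix⟩ := exists_fixedPoint_of_convex_isCompact (f := fun a ↦ ρ (f (Λ a)))
    ⟨_, hsimplex _ (hfk hx₀)⟩ (isCompact_stdSimplex ℝ t) (convex_stdSimplex ℝ t)
    (hρ.comp_continuousOn (hf.comp hΛ.continuousOn hΛs)) fun a ha ↦ hsimplex _ (hfk (hΛs ha))
  refine ⟨Λ a, hΛs ha, ?_⟩
  have happrox := hdist _ (hfk (hΛs ha))
  rwa [hfix, dist_comm] at happrox

end Schauder

/-! ### Periodic solutions of the linear equation -/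

theorem totallyBounded_of_forall_exists_dist_lt {X : Type*} [PseudoMetricSpace X] {s : Set X}
    (h : ∀ ε > 0, ∃ k, TotallyBounded k ∧ ∀ x ∈ s, ∃ y ∈ k, dist x y < ε) :
    TotallyBounded s := by
  refine Metric.totallyBounded_iff.mpr fun ε hε ↦ ?_
  obtain ⟨k, hk, hsk⟩ := h (ε / 2) (half_pos hε)
  obtain ⟨t, ht, hkt⟩ := Metric.totallyBounded_iff.mp hk (ε / 2) (half_pos hε)
  refine ⟨t, ht, fun x hx ↦ ?_⟩
  obtain ⟨y, hy, hxy⟩ := hsk x hx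
  obtain ⟨z, hz, hyz⟩ := mem_iUnion₂.mp (hkt hy)
  exact mem_biUnion hz (mem_ball.mpr <| (dist_triangle x y z).trans_lt <| by
    linarith [mem_ball.mp hyz])

theorem isCompact_closure_of_equicontinuous {X Y : Type*} [TopologicalSpace X] [CompactSpace X]
    [MetricSpace Y] {S : Set C(X, Y)} (hS : Equicontinuous fun f : S ↦ ⇑f.1) {k : Set Y}
    (hk : IsCompact k) (hSk : ∀ f ∈ S, ∀ x, f x ∈ k) : IsCompact (closure S) := by
  let e := (ContinuousMap.isometryEquivBoundedOfCompact X Y).toHomeomorph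
  have heS : IsCompact (closure (e '' S)) := by
    refine BoundedContinuousFunction.arzela_ascoli k hk _ ?_ fun x U hU ↦ ?_
    · rintro _ x ⟨f, hf, rfl⟩
      exact hSk f hf x
    · filter_upwards [hS x U hU] with y hy
      rintro ⟨_, f, hf, rfl⟩
      exact hy ⟨f, hf⟩
  rwa [← e.image_closure, e.isCompact_image] at heS

theorem equicontinuous_of_eventually_dist_add_coe_lt {ω : ℝ} {ι Y : Type*} [PseudoMetricSpace Y]
    {f : ι → AddCircle ω → Y}
    (h : ∀ ε > 0, ∀ᶠ d : ℝ in 𝓝[≥] 0, ∀ i y, dist (f i (y + d)) (f i y) < ε) :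
    Equicontinuous f := by
  refine fun x ↦ Metric.equicontinuousAt_iff_right.mpr fun ε hε ↦ ?_
  have hright := eventually_nhdsWithin_iff.mp (h ε hε)
  have hleft : ∀ᶠ d : ℝ in 𝓝 0, 0 ≤ -d → ∀ i y, dist (f i (y + (-d : ℝ))) (f i y) < ε :=
    (continuous_neg.tendsto' (0 : ℝ) 0 neg_zero).eventually hright
  have hboth : ∀ᶠ d : ℝ in 𝓝 0, ∀ i, dist (f i x) (f i (x + d)) < ε := by
    filter_upwards [hright, hleft] with d hr hl i
    rcases le_total 0 d with hd | hd
    · simpa only [dist_comm] using hr hd i x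
    · simpa using hl (neg_nonneg.mpr hd) i (x + d)
  have hmap : map (fun d : ℝ ↦ x + (d : AddCircle ω)) (𝓝 0) = 𝓝 x := by
    have hopen : IsOpenMap fun d : ℝ ↦ x + (d : AddCircle ω) :=
      (isOpenMap_add_left x).comp QuotientAddGroup.isOpenMap_coe
    have hcont : Continuous fun d : ℝ ↦ x + (d : AddCircle ω) :=
      continuous_const.add (AddCircle.continuous_mk' ω)
    simpa using hopen.map_nhds_eq hcont.continuousAt (x := 0)
  rw [← hmap, eventually_map]
  exact hboth

section ExpDecay

variable {E : Type*} [NormedAddCommGroup E] {ν : ℝ}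

theorem integrableOn_const_mul_exp_neg_mul_Ioi (hν : 0 < ν) (B : ℝ) :
    IntegrableOn (fun s ↦ B * Real.exp (-ν * s)) (Ioi 0) :=
  (integrableOn_exp_mul_Ioi (neg_lt_zero.mpr hν) 0).const_mul B

theorem norm_integral_Ioi_le_of_norm_le_const_mul_exp [NormedSpace ℝ E] (hν : 0 < ν) {B : ℝ}
    {f : ℝ → E} (hf : ∀ s > 0, ‖f s‖ ≤ B * Real.exp (-ν * s)) :
    ‖∫ s in Ioi 0, f s‖ ≤ B / ν := by
  refine (norm_integral_le_of_norm_le (integrableOn_const_mul_exp_neg_mul_Ioi hν B)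
    ((ae_restrict_mem measurableSet_Ioi).mono hf)).trans_eq ?_
  rw [integral_const_mul, integral_exp_mul_Ioi (neg_lt_zero.mpr hν)]
  simp [div_eq_mul_inv]

end ExpDecay

/-- The family `T t`, `t ≥ 0`, is a C₀-semigroup of operators with `‖T t‖ ≤ M * exp (-ν * t)` for
some rate of decay `ν > 0`. The values of `T` at negative times are unconstrained. -/
structure IsExpStableSemigroup {E : Type*} [NormedAddCommGroup E] [NormedSpace ℝ E]
    (T : ℝ → E →L[ℝ] E) (M ν : ℝ) : Prop where
  rate_pos : 0 < ν
  zero_eq_id : T 0 = ContinuousLinearMap.id ℝ E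
  add_eq_comp : ∀ t s, 0 ≤ t → 0 ≤ s → T (t + s) = (T t).comp (T s)
  continuousOn : ∀ x, ContinuousOn (fun t ↦ T t x) (Ici 0)
  norm_le : ∀ t, 0 ≤ t → ‖T t‖ ≤ M * Real.exp (-ν * t)

/-- `u` is a mild solution of `u' + A u = f` on `ℝ`, where `-A` is the generator of `T`. -/
def IsMildSolution {E : Type*} [NormedAddCommGroup E] [NormedSpace ℝ E] (T : ℝ → E →L[ℝ] E)
    (f u : ℝ → E) : Prop :=
  ∀ s t, s ≤ t → u t = T (t - s) (u s) + ∫ r in s..t, T (t - r) (f r)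

namespace IsExpStableSemigroup

variable {E : Type*} [NormedAddCommGroup E] [NormedSpace ℝ E] {T : ℝ → E →L[ℝ] E} {M ν ω : ℝ}

theorem bound_nonneg (H : IsExpStableSemigroup T M ν) : 0 ≤ M := by
  simpa using (norm_nonneg _).trans (H.norm_le 0 le_rfl)

theorem norm_apply_le (H : IsExpStableSemigroup T M ν) {t : ℝ} (ht : 0 ≤ t) (x : E) :
    ‖T t x‖ ≤ M * ‖x‖ * Real.exp (-ν * t) := by
  rw [mul_right_comm]
  exact (T t).le_of_opNorm_le (H.norm_le t ht) x

theorem norm_apply_le_mul_norm (H : IsExpStableSemigroup T M ν) {t : ℝ} (ht : 0 ≤ t) (x : E) :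
    ‖T t x‖ ≤ M * ‖x‖ :=
  (H.norm_apply_le ht x).trans <|
    mul_le_of_le_one_right (mul_nonneg H.bound_nonneg (norm_nonneg x)) <|
      Real.exp_le_one_iff.mpr <| mul_nonpos_of_nonpos_of_nonneg (neg_nonpos.mpr H.rate_pos.le) ht

theorem continuousOn_uncurry (H : IsExpStableSemigroup T M ν) :
    ContinuousOn (fun p : ℝ × E ↦ T p.1 p.2) (Ici 0 ×ˢ univ) := by
  refine continuousOn_prod_of_continuousOn_lipschitzOnWith' _ ⟨M, H.bound_nonneg⟩ (fun t ht ↦ ?_)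
    fun x _ ↦ H.continuousOn x
  refine LipschitzWith.lipschitzOnWith (.of_dist_le_mul fun x y ↦ ?_)
  simpa only [dist_eq_norm, ← map_sub] using! H.norm_apply_le_mul_norm ht (x - y)

theorem eventually_forall_norm_apply_sub_lt (H : IsExpStableSemigroup T M ν) {k : Set E}
    (hk : IsCompact k) {ε : ℝ} (hε : 0 < ε) :
    ∀ᶠ d in 𝓝[≥] 0, ∀ x ∈ k, ‖T d x - x‖ < ε := by
  have hlocal (x : E) : ∀ᶠ p : ℝ × E in 𝓝 (0, x), 0 ≤ p.1 → ‖T p.1 p.2 - p.2‖ < ε := by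
    have hcont := (H.continuousOn_uncurry.sub continuousOn_snd).norm (0, x)
      (mk_mem_prod self_mem_Ici (mem_univ x))
    simpa using! eventually_nhdsWithin_iff.mp
      (hcont.eventually (gt_mem_nhds (by simpa [H.zero_eq_id] using hε)))
  refine eventually_nhdsWithin_iff.mpr ?_
  filter_upwards [hk.eventually_forall_of_forall_eventually
    (P := fun d x ↦ 0 ≤ d → ‖T d x - x‖ < ε) fun x _ ↦ hlocal x] with d hd hd₀ x hx
  exact hd x hx hd₀

theorem continuousOn_apply_sub_coe (H : IsExpStableSemigroup T M ν) (h : C(AddCircle ω, E))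
    (y : AddCircle ω) : ContinuousOn (fun s : ℝ ↦ T s (h (y - s))) (Ici 0) :=
  H.continuousOn_uncurry.comp (continuous_id.prodMk (h.continuous.comp
    (continuous_const.sub (AddCircle.continuous_mk' ω)))).continuousOn fun _ hs ↦ ⟨hs, mem_univ _⟩

variable [Fact (0 < ω)]

theorem norm_apply_coe_le (H : IsExpStableSemigroup T M ν) (h : C(AddCircle ω, E)) {s : ℝ}
    (hs : 0 ≤ s) (y : AddCircle ω) : ‖T s (h y)‖ ≤ M * ‖h‖ * Real.exp (-ν * s) :=
  (H.norm_apply_le hs (h y)).trans <| by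
    gcongr
    exacts [H.bound_nonneg, h.norm_coe_le_norm y]

theorem integrableOn_apply_sub_coe (H : IsExpStableSemigroup T M ν) (h : C(AddCircle ω, E))
    (y : AddCircle ω) : IntegrableOn (fun s : ℝ ↦ T s (h (y - s))) (Ioi 0) :=
  (integrableOn_const_mul_exp_neg_mul_Ioi H.rate_pos (M * ‖h‖)).mono'
    ((H.continuousOn_apply_sub_coe h y).mono Ioi_subset_Ici_self
      |>.aestronglyMeasurable measurableSet_Ioi)
    ((ae_restrict_mem measurableSet_Ioi).mono fun _ hs ↦ H.norm_apply_coe_le h (le_of_lt hs) _)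

theorem continuous_integral_apply_sub_coe (H : IsExpStableSemigroup T M ν)
    (h : C(AddCircle ω, E)) :
    Continuous fun y : AddCircle ω ↦ ∫ s in Ioi (0 : ℝ), T s (h (y - s)) :=
  continuous_of_dominated (fun y ↦ (H.integrableOn_apply_sub_coe h y).aestronglyMeasurable)
    (fun _ ↦ (ae_restrict_mem measurableSet_Ioi).mono fun _ hs ↦
      H.norm_apply_coe_le h (le_of_lt hs) _)
    (integrableOn_const_mul_exp_neg_mul_Ioi H.rate_pos (M * ‖h‖))
    (.of_forall fun s ↦ (T s).continuous.comp
      (h.continuous.comp (continuous_id.sub continuous_const)))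

/-- The periodic solution operator `h ↦ ∫ s in (0, ∞), T s (h (· - s))`, which sends `h` to the
`ω`-periodic mild solution of `u' + A u = h`. Functions of period `ω` on `ℝ` are encoded as
functions on `AddCircle ω`. -/
noncomputable def periodicSolution (H : IsExpStableSemigroup T M ν) :
    C(AddCircle ω, E) →L[ℝ] C(AddCircle ω, E) :=
  LinearMap.mkContinuous
    { toFun := fun h ↦ ⟨_, H.continuous_integral_apply_sub_coe h⟩
      map_add' := fun h g ↦ by
        ext y
        simp only [ContinuousMap.coe_mk, ContinuousMap.add_apply, map_add]
        exact integral_add (H.integrableOn_apply_sub_coe h y) (H.integrableOn_apply_sub_coe g y)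
      map_smul' := fun c h ↦ by
        ext y
        simp only [ContinuousMap.coe_mk, ContinuousMap.smul_apply, map_smul]
        exact integral_smul c _ }
    (M / ν) fun h ↦ by
      have hM := H.bound_nonneg
      have hν := H.rate_pos
      rw [ContinuousMap.norm_le _ (by positivity), div_mul_eq_mul_div]
      exact fun y ↦ norm_integral_Ioi_le_of_norm_le_const_mul_exp hν fun s hs ↦
        H.norm_apply_coe_le h hs.le _

theorem periodicSolution_apply (H : IsExpStableSemigroup T M ν) (h : C(AddCircle ω, E))
    (y : AddCircle ω) : H.periodicSolution h y = ∫ s in Ioi (0 : ℝ), T s (h (y - s)) := rfl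

theorem periodicSolution_nonneg [PartialOrder E] [IsOrderedAddMonoid E] [IsOrderedModule ℝ E]
    [ClosedIciTopology E] (H : IsExpStableSemigroup T M ν)
    (hT : ∀ t, 0 ≤ t → ∀ x, 0 ≤ x → 0 ≤ T t x) {h : C(AddCircle ω, E)} (hh : 0 ≤ h) :
    0 ≤ H.periodicSolution h := fun _ ↦
  integral_nonneg_of_ae <| (ae_restrict_mem measurableSet_Ioi).mono fun s hs ↦
    hT s (le_of_lt hs) _ (hh _)

theorem norm_integral_apply_sub_coe_le (H : IsExpStableSemigroup T M ν) (h : C(AddCircle ω, E))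
    (y : AddCircle ω) {a : ℝ} (ha : 0 ≤ a) :
    ‖∫ s in 0..a, T s (h (y - s))‖ ≤ M * ‖h‖ * a := by
  have hbound := intervalIntegral.norm_integral_le_of_norm_le_const (a := 0) (b := a)
    (f := fun s : ℝ ↦ T s (h (y - s))) (C := M * ‖h‖) fun s hs ↦ by
      rw [uIoc_of_le ha] at hs
      refine (H.norm_apply_le_mul_norm hs.1.le _).trans ?_
      gcongr
      exacts [H.bound_nonneg, h.norm_coe_le_norm _]
  rwa [sub_zero, abs_of_nonneg ha] at hbound

theorem eventually_norm_integral_apply_sub_coe_lt (H : IsExpStableSemigroup T M ν) (R : ℝ) {ε : ℝ}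
    (hε : 0 < ε) :
    ∀ᶠ a in 𝓝[≥] 0, ∀ h : C(AddCircle ω, E), ‖h‖ ≤ R → ∀ y : AddCircle ω,
      ‖∫ s in 0..a, T s (h (y - s))‖ < ε := by
  have hcont : Continuous fun a : ℝ ↦ M * R * a := by fun_prop
  have hsmall : ∀ᶠ a in 𝓝 0, M * R * a < ε :=
    hcont.continuousAt.eventually (gt_mem_nhds (by simpa using hε))
  filter_upwards [hsmall.filter_mono nhdsWithin_le_nhds, self_mem_nhdsWithin] with a haε ha h hh y
  have hM := H.bound_nonneg
  have ha' : 0 ≤ a := ha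
  exact (H.norm_integral_apply_sub_coe_le h y ha).trans_lt (lt_of_le_of_lt (by gcongr) haε)

variable [CompleteSpace E]

theorem apply_periodicSolution (H : IsExpStableSemigroup T M ν) (h : C(AddCircle ω, E))
    (y : AddCircle ω) {a : ℝ} (ha : 0 ≤ a) :
    T a (H.periodicSolution h y) = ∫ s in Ioi (0 : ℝ), T (a + s) (h (y - s)) := by
  rw [periodicSolution_apply,
    ← ContinuousLinearMap.integral_comp_comm _ (H.integrableOn_apply_sub_coe h y)]
  exact setIntegral_congr_fun measurableSet_Ioi fun s hs ↦ by
    rw [H.add_eq_comp a s ha (le_of_lt hs), ContinuousLinearMap.comp_apply]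

theorem norm_apply_periodicSolution_le (H : IsExpStableSemigroup T M ν) {h : C(AddCircle ω, E)}
    {B : ℝ} (hB : ∀ s, 0 ≤ s → ∀ y, ‖T s (h y)‖ ≤ B * Real.exp (-ν * s)) {t : ℝ} (ht : 0 ≤ t)
    (y : AddCircle ω) : ‖T t (H.periodicSolution h y)‖ ≤ B / ν * Real.exp (-ν * t) := by
  rw [H.apply_periodicSolution h y ht, div_mul_eq_mul_div]
  refine norm_integral_Ioi_le_of_norm_le_const_mul_exp H.rate_pos fun s hs ↦ ?_
  rw [mul_assoc, ← Real.exp_add, ← mul_add]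
  exact hB (t + s) (add_nonneg ht hs.le) _

theorem periodicSolution_eq_apply_add_integral (H : IsExpStableSemigroup T M ν)
    (h : C(AddCircle ω, E)) (y : AddCircle ω) {a : ℝ} (ha : 0 ≤ a) :
    H.periodicSolution h y =
      T a (H.periodicSolution h (y - a)) + ∫ s in 0..a, T s (h (y - s)) := by
  have htail : T a (H.periodicSolution h (y - a)) = ∫ s in Ioi a, T s (h (y - s)) := by
    have hshift := (measurePreserving_add_left volume a).setIntegral_preimage_emb
      (measurableEmbedding_addLeft a) (fun s : ℝ ↦ T s (h (y - s))) (Ioi a)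
    rw [preimage_const_add_Ioi, sub_self] at hshift
    simp only [H.apply_periodicSolution h _ ha, ← hshift, AddCircle.coe_add, sub_sub]
  have hint := H.integrableOn_apply_sub_coe h y
  rw [htail, add_comm, periodicSolution_apply,
    intervalIntegral.integral_interval_add_Ioi hint (hint.mono_set (Ioi_subset_Ioi ha))]

theorem isMildSolution_periodicSolution (H : IsExpStableSemigroup T M ν)
    (h : C(AddCircle ω, E)) :
    IsMildSolution T (fun t ↦ h t) fun t ↦ H.periodicSolution h t := fun s t hst ↦ by
  have hsub (r : ℝ) : (t : AddCircle ω) - ((t - r : ℝ) : AddCircle ω) = r := by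
    rw [AddCircle.coe_sub, sub_sub_cancel]
  have hreflect := intervalIntegral.integral_comp_sub_left (a := s) (b := t)
    (fun r : ℝ ↦ T r (h (t - r))) t
  simp only [hsub, sub_self] at hreflect
  have hsplit := H.periodicSolution_eq_apply_add_integral h t (sub_nonneg.mpr hst)
  rwa [← hreflect, hsub] at hsplit

theorem isCompact_closure_periodicSolution_values (H : IsExpStableSemigroup T M ν)
    (hcompact : ∀ t, 0 < t → IsCompactOperator (T t)) (R : ℝ) :
    IsCompact (closure {x | ∃ h : C(AddCircle ω, E), ‖h‖ ≤ R ∧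
      ∃ y, H.periodicSolution h y = x}) := by
  refine TotallyBounded.isCompact_of_isClosed (.closure ?_) isClosed_closure
  refine totallyBounded_of_forall_exists_dist_lt fun ε hε ↦ ?_
  have hsmall := (H.eventually_norm_integral_apply_sub_coe_lt (ω := ω) R hε).filter_mono
    (nhdsWithin_mono 0 Ioi_subset_Ici_self)
  obtain ⟨a, haε, ha⟩ := (hsmall.and self_mem_nhdsWithin).exists
  let r := ‖H.periodicSolution (ω := ω)‖ * R
  refine ⟨T a '' closedBall 0 r, ((hcompact a ha).isCompact_closure_image_closedBall (𝕜₁ := ℝ)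
    r).totallyBounded.subset subset_closure, ?_⟩
  rintro _ ⟨h, hh, y, rfl⟩
  refine ⟨_, mem_image_of_mem _ (x := H.periodicSolution h (y - a))
    (mem_closedBall_zero_iff.mpr ?_), ?_⟩
  · exact ((H.periodicSolution h).norm_coe_le_norm _).trans
      ((H.periodicSolution).le_opNorm_of_le hh)
  · rw [H.periodicSolution_eq_apply_add_integral h y (le_of_lt ha), dist_eq_norm,
      add_sub_cancel_left]
    exact haε h hh y

theorem isCompactOperator_periodicSolution (H : IsExpStableSemigroup T M ν)
    (hcompact : ∀ t, 0 < t → IsCompactOperator (T t)) :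
    IsCompactOperator (H.periodicSolution (ω := ω)) := by
  have hvalues := H.isCompact_closure_periodicSolution_values (ω := ω) hcompact 1
  refine (isCompactOperator_iff_isCompact_closure_image_closedBall
    (H.periodicSolution (ω := ω)).toLinearMap one_pos).mpr ?_
  refine isCompact_closure_of_equicontinuous ?_ hvalues ?_
  · refine equicontinuous_of_eventually_dist_add_coe_lt fun ε hε ↦ ?_
    filter_upwards [H.eventually_forall_norm_apply_sub_lt hvalues (half_pos hε),
      H.eventually_norm_integral_apply_sub_coe_lt (ω := ω) 1 (half_pos hε),
      self_mem_nhdsWithin] with d hT hint hd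
    rintro ⟨_, h, hh, rfl⟩ y
    have hh' : ‖h‖ ≤ 1 := mem_closedBall_zero_iff.mp hh
    change dist (H.periodicSolution h (y + d)) (H.periodicSolution h y) < ε
    rw [H.periodicSolution_eq_apply_add_integral h (y + d) hd, add_sub_cancel_right, dist_eq_norm,
      add_sub_right_comm]
    linarith [norm_add_le (T d (H.periodicSolution h y) - H.periodicSolution h y)
      (∫ s in 0..d, T s (h (y + d - s))), hT _ (subset_closure ⟨h, hh', y, rfl⟩),
      hint h hh' (y + d)]
  · rintro _ ⟨h, hh, rfl⟩ y
    exact subset_closure ⟨h, mem_closedBall_zero_iff.mp hh, y, rfl⟩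

end IsExpStableSemigroup

/-! ### Positive periodic solutions of the delay equation -/

section Periodic

variable {E : Type*} [TopologicalSpace E] {ω : ℝ}

theorem exists_continuousMap_addCircle_forall_coe_eq {g : ℝ → E} (hg : Continuous g)
    (hper : Function.Periodic g ω) : ∃ h : C(AddCircle ω, E), ∀ t : ℝ, h t = g t :=
  ⟨⟨hper.lift, hg.quotient_lift _⟩, hper.lift_coe⟩

theorem exists_continuousOn_addCircle_forall_coe_eq [Nonempty E] {X : Type*} [TopologicalSpace X]
    {s : Set X} {g : X → ℝ → E} (hg : ContinuousOn (fun p : X × ℝ ↦ g p.1 p.2) (s ×ˢ univ))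
    (hper : ∀ x ∈ s, Function.Periodic (g x) ω) :
    ∃ G : X → C(AddCircle ω, E), ContinuousOn G s ∧ ∀ x ∈ s, ∀ t : ℝ, G x t = g x t := by
  classical
  let Φ (p : s × AddCircle ω) : E := (hper p.1 p.1.2).lift p.2
  have hΦ : Continuous Φ := by
    have hquot : IsOpenQuotientMap (Prod.map id (↑) : s × ℝ → s × AddCircle ω) :=
      IsOpenQuotientMap.id.prodMap QuotientAddGroup.isOpenQuotientMap_mk
    exact hquot.isQuotientMap.continuous_iff.mpr <| hg.comp_continuous
      (f := fun p : s × ℝ ↦ ((p.1 : X), p.2)) (by fun_prop) fun p ↦ ⟨p.1.2, mem_univ _⟩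
  let G (x : s) : C(AddCircle ω, E) := ⟨fun y ↦ Φ (x, y), by fun_prop⟩
  obtain ⟨e⟩ := ‹Nonempty E›
  refine ⟨fun x ↦ if hx : x ∈ s then G ⟨x, hx⟩ else .const _ e, ?_, fun x hx t ↦ ?_⟩
  · rw [continuousOn_iff_continuous_domRestrict, domRestrict_dite]
    exact ContinuousMap.continuous_of_continuous_uncurry _ hΦ
  · simpa only [dif_pos hx] using! (hper x hx).lift_coe t

end Periodic

section Ordered

instance {X E : Type*} [TopologicalSpace X] [TopologicalSpace E] [AddCommGroup E]
    [IsTopologicalAddGroup E] [Module ℝ E] [ContinuousConstSMul ℝ E] [PartialOrder E]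
    [IsOrderedAddMonoid E] [IsOrderedModule ℝ E] : IsOrderedModule ℝ C(X, E) :=
  .of_smul_nonneg fun _ hc _ hf x ↦ smul_nonneg hc (hf x)

instance {X E : Type*} [TopologicalSpace X] [TopologicalSpace E] [PartialOrder E]
    [OrderClosedTopology E] : OrderClosedTopology C(X, E) where
  isClosed_le' := by
    simp only [ContinuousMap.le_def, ofPred_forall]
    exact isClosed_iInter fun x ↦ isClosed_le (by fun_prop) (by fun_prop)

theorem continuousMap_norm_le_mul_norm_of_le {X E : Type*} [TopologicalSpace X] [CompactSpace X]
    [NormedAddCommGroup E] [PartialOrder E] {N : ℝ} (hN : 0 ≤ N)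
    (hnormal : ∀ x y : E, 0 ≤ x → x ≤ y → ‖x‖ ≤ N * ‖y‖) {f g : C(X, E)} (hf : 0 ≤ f)
    (hfg : f ≤ g) : ‖f‖ ≤ N * ‖g‖ := by
  refine (ContinuousMap.norm_le _ (by positivity)).mpr fun x ↦
    (hnormal _ _ (hf x) (hfg x)).trans ?_
  gcongr
  exact g.norm_coe_le_norm x

variable {V : Type*} [NormedAddCommGroup V] [NormedSpace ℝ V] [PartialOrder V]
  [IsOrderedAddMonoid V] [OrderClosedTopology V]

theorem exists_nonneg_apply_add_eq {L : V →L[ℝ] V} (hL : ∀ x, 0 ≤ x → 0 ≤ L x) {g : V}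
    (hg : 0 ≤ g) (hsum : Summable fun n ↦ (L ^ n) g) : ∃ w, 0 ≤ w ∧ L w + g = w := by
  refine ⟨∑' n, (L ^ n) g, tsum_nonneg fun n ↦ ?_, ?_⟩
  · induction n with
    | zero => simpa using hg
    | succ n ih =>
      rw [pow_succ']
      exact hL _ ih
  · rw [L.map_tsum hsum, hsum.tsum_eq_zero_add, add_comm]
    simp [pow_succ']

theorem exists_fixedPoint_of_isCompactOperator [IsOrderedModule ℝ V] {N : ℝ}
    (hnormal : ∀ x y : V, 0 ≤ x → x ≤ y → ‖x‖ ≤ N * ‖y‖) {Q : V →L[ℝ] V}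
    (hQ : IsCompactOperator Q) (hQ₀ : ∀ x, 0 ≤ x → 0 ≤ Q x) {w b : V} (hw : 0 ≤ w)
    (hb : Q b ≤ w) {G : V → V} (hG : ContinuousOn G (Icc 0 w))
    (hGb : MapsTo G (Icc 0 w) (Icc 0 b)) : ∃ v ∈ Icc 0 w, Q (G v) = v := by
  have hmono : Monotone Q := (monotone_iff_map_nonneg Q).mpr hQ₀
  have hball : G '' Icc 0 w ⊆ closedBall 0 (N * ‖b‖) := image_subset_iff.mpr fun v hv ↦
    mem_closedBall_zero_iff.mpr (hnormal _ _ (hGb hv).1 (hGb hv).2)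
  refine exists_fixedPoint_of_isCompact_closure_image (nonempty_Icc.mpr hw) isClosed_Icc
    (convex_Icc 0 w) (Q.continuous.comp_continuousOn hG)
    (fun v hv ↦ ⟨hQ₀ _ (hGb hv).1, (hmono (hGb hv).2).trans hb⟩) ?_
  refine (hQ.isCompact_closure_image_closedBall (𝕜₁ := ℝ) (N * ‖b‖)).of_isClosed_subset
    isClosed_closure (closure_mono ?_)
  simpa only [image_image] using! image_mono (f := Q) hball

theorem exists_partialOrder_Ici_zero_eq {E : Type*} [AddCommGroup E] [Module ℝ E]
    [TopologicalSpace E] [IsTopologicalAddGroup E] {K : Set E} (hK₀ : 0 ∈ K) (hclosed : IsClosed K)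
    (hadd : ∀ x ∈ K, ∀ y ∈ K, x + y ∈ K) (hsmul : ∀ c : ℝ, 0 ≤ c → ∀ x ∈ K, c • x ∈ K)
    (hpointed : ∀ x : E, x ∈ K → -x ∈ K → x = 0) :
    ∃ _ : PartialOrder E, IsOrderedAddMonoid E ∧ IsOrderedModule ℝ E ∧ OrderClosedTopology E ∧
      Ici 0 = K := by
  let C : ConvexCone ℝ E := ⟨K, fun c hc x hx ↦ hsmul c hc.le x hx, fun x hx y hy ↦ hadd x hx y hy⟩
  have hsalient : C.Salient := fun x hx hx₀ hneg ↦ hx₀ (hpointed x hx hneg)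
  let _ : PartialOrder E := C.toPartialOrder hK₀ hsalient
  have : IsOrderedAddMonoid E := C.to_isOrderedAddMonoid hK₀ hsalient
  have hIci : Ici 0 = K := by
    ext x
    change x - 0 ∈ K ↔ x ∈ K
    rw [sub_zero]
  refine ⟨inferInstance, inferInstance, .of_smul_nonneg fun c hc x hx ↦ ?_, ⟨?_⟩, hIci⟩
  · rw [← mem_Ici, hIci] at hx ⊢
    exact hsmul c hc x hx
  · exact hclosed.preimage (continuous_snd.sub continuous_fst)

end Ordered

section DelayFeedback

variable {E : Type*} [NormedAddCommGroup E] [NormedSpace ℝ E] {ω : ℝ}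

/-- The operator `h ↦ C₁ • h + C₂ • h (· - τ)`, the linear part of the bound imposed on the
nonlinearity. -/
noncomputable def delayFeedback (C₁ C₂ τ : ℝ) : C(AddCircle ω, E) →L[ℝ] C(AddCircle ω, E) :=
  C₁ • ContinuousLinearMap.id ℝ _ +
    C₂ • ContinuousMap.compCLM ℝ E (ContinuousMap.id _ - .const _ (τ : AddCircle ω))

theorem delayFeedback_apply (C₁ C₂ τ : ℝ) (h : C(AddCircle ω, E)) (y : AddCircle ω) :
    delayFeedback C₁ C₂ τ h y = C₁ • h y + C₂ • h (y - τ) := rfl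

theorem norm_apply_delayFeedback_le {C₁ C₂ : ℝ} (hC₁ : 0 ≤ C₁) (hC₂ : 0 ≤ C₂) (τ : ℝ)
    {S : E →L[ℝ] E} {h : C(AddCircle ω, E)} {B : ℝ} (hB : ∀ y, ‖S (h y)‖ ≤ B) (y : AddCircle ω) :
    ‖S (delayFeedback C₁ C₂ τ h y)‖ ≤ (C₁ + C₂) * B := by
  rw [delayFeedback_apply, map_add, map_smul, map_smul, add_mul]
  refine norm_add_le_of_le ?_ ?_
  all_goals
    rw [norm_smul, Real.norm_of_nonneg ‹_›]
    gcongr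
    exact hB _

theorem delayFeedback_nonneg [PartialOrder E] [IsOrderedAddMonoid E] [IsOrderedModule ℝ E]
    {C₁ C₂ : ℝ} (hC₁ : 0 ≤ C₁) (hC₂ : 0 ≤ C₂) (τ : ℝ) {h : C(AddCircle ω, E)} (hh : 0 ≤ h) :
    0 ≤ delayFeedback C₁ C₂ τ h := fun y ↦
  add_nonneg (smul_nonneg hC₁ (hh y)) (smul_nonneg hC₂ (hh (y - τ)))

end DelayFeedback

theorem exists_continuousOn_forall_coe_eq_delay {E : Type*} [TopologicalSpace E] [Zero E]
    [PartialOrder E] {ω : ℝ} {F : ℝ → E → E → E}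
    (hF : ContinuousOn (fun p : ℝ × E × E ↦ F p.1 p.2.1 p.2.2) (univ ×ˢ Ici 0 ×ˢ Ici 0))
    (hFper : ∀ t x y, 0 ≤ x → 0 ≤ y → F (t + ω) x y = F t x y) (τ : ℝ) :
    ∃ G : C(AddCircle ω, E) → C(AddCircle ω, E), ContinuousOn G (Ici 0) ∧
      ∀ v, 0 ≤ v → ∀ t : ℝ, G v t = F t (v t) (v (t - τ : ℝ)) := by
  refine exists_continuousOn_addCircle_forall_coe_eq (s := Ici 0)
    (g := fun (v : C(AddCircle ω, E)) (t : ℝ) ↦ F t (v t) (v (t - τ : ℝ))) ?_ fun v hv t ↦ ?_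
  · have harg : Continuous fun p : C(AddCircle ω, E) × ℝ ↦ (p.2, p.1 p.2, p.1 (p.2 - τ : ℝ)) := by
      fun_prop
    exact hF.comp harg.continuousOn fun p hp ↦ ⟨mem_univ _, hp.1 _, hp.1 _⟩
  · simpa [add_sub_right_comm] using hFper t _ _ (hv t) (hv (t - τ : ℝ))

namespace IsExpStableSemigroup

variable {E : Type*} [NormedAddCommGroup E] [NormedSpace ℝ E] [CompleteSpace E]
  {T : ℝ → E →L[ℝ] E} {M ν ω : ℝ} [Fact (0 < ω)]

theorem norm_apply_pow_comp_delayFeedback_le (H : IsExpStableSemigroup T M ν) {C₁ C₂ : ℝ}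
    (hC₁ : 0 ≤ C₁) (hC₂ : 0 ≤ C₂) (τ : ℝ) (h : C(AddCircle ω, E)) (n : ℕ) {s : ℝ} (hs : 0 ≤ s)
    (y : AddCircle ω) :
    ‖T s (((H.periodicSolution.comp (delayFeedback C₁ C₂ τ)) ^ n) h y)‖ ≤
      M * ‖h‖ * ((C₁ + C₂) / ν) ^ n * Real.exp (-ν * s) := by
  induction n generalizing s y with
  | zero => simpa using H.norm_apply_coe_le h hs y
  | succ n ih =>
    rw [pow_succ']
    refine (H.norm_apply_periodicSolution_le (fun r hr z ↦ ?_) hs y).trans_eq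
      (b := (C₁ + C₂) * (M * ‖h‖ * ((C₁ + C₂) / ν) ^ n) / ν * Real.exp (-ν * s)) (by ring)
    rw [mul_assoc]
    exact norm_apply_delayFeedback_le hC₁ hC₂ τ (fun z ↦ ih hr z) z

theorem summable_pow_comp_delayFeedback (H : IsExpStableSemigroup T M ν) {C₁ C₂ : ℝ}
    (hC₁ : 0 ≤ C₁) (hC₂ : 0 ≤ C₂) (hC : C₁ + C₂ < ν) (τ : ℝ) (h : C(AddCircle ω, E)) :
    Summable fun n ↦ ((H.periodicSolution.comp (delayFeedback C₁ C₂ τ)) ^ n) h := by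
  have hM := H.bound_nonneg
  have hν := H.rate_pos
  refine .of_norm_bounded ((summable_geometric_of_lt_one (by positivity)
    ((div_lt_one hν).mpr hC)).mul_left (M * ‖h‖)) fun n ↦
      (ContinuousMap.norm_le _ (by positivity)).mpr fun y ↦ ?_
  simpa [H.zero_eq_id] using H.norm_apply_pow_comp_delayFeedback_le hC₁ hC₂ τ h n le_rfl y

variable [PartialOrder E] [IsOrderedAddMonoid E] [IsOrderedModule ℝ E] [OrderClosedTopology E]

theorem exists_nonneg_periodicSolution_delayFeedback_add_eq (H : IsExpStableSemigroup T M ν)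
    (hT : ∀ t, 0 ≤ t → ∀ x, 0 ≤ x → 0 ≤ T t x) {C₁ C₂ : ℝ} (hC₁ : 0 ≤ C₁) (hC₂ : 0 ≤ C₂)
    (hC : C₁ + C₂ < ν) (τ : ℝ) {h : C(AddCircle ω, E)} (hh : 0 ≤ h) :
    ∃ w, 0 ≤ w ∧ H.periodicSolution (delayFeedback C₁ C₂ τ w + h) = w := by
  have hL (v : C(AddCircle ω, E)) (hv : 0 ≤ v) :
      0 ≤ (H.periodicSolution.comp (delayFeedback C₁ C₂ τ)) v := by
    rw [ContinuousLinearMap.comp_apply]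
    exact H.periodicSolution_nonneg hT (delayFeedback_nonneg hC₁ hC₂ τ hv)
  obtain ⟨w, hw, hfix⟩ := exists_nonneg_apply_add_eq hL (H.periodicSolution_nonneg hT hh)
    (H.summable_pow_comp_delayFeedback hC₁ hC₂ hC τ _)
  exact ⟨w, hw, (map_add _ _ _).trans hfix⟩

theorem exists_periodic_isMildSolution (H : IsExpStableSemigroup T M ν)
    (hT : ∀ t, 0 ≤ t → ∀ x, 0 ≤ x → 0 ≤ T t x) (hcompact : ∀ t, 0 < t → IsCompactOperator (T t))
    {N : ℝ} (hN : 0 ≤ N) (hnormal : ∀ x y : E, 0 ≤ x → x ≤ y → ‖x‖ ≤ N * ‖y‖)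
    {F : ℝ → E → E → E}
    (hF : ContinuousOn (fun p : ℝ × E × E ↦ F p.1 p.2.1 p.2.2) (univ ×ˢ Ici 0 ×ˢ Ici 0))
    (hF₀ : ∀ t x y, 0 ≤ x → 0 ≤ y → 0 ≤ F t x y)
    (hFper : ∀ t x y, 0 ≤ x → 0 ≤ y → F (t + ω) x y = F t x y) (τ : ℝ) {C₁ C₂ : ℝ}
    (hC₁ : 0 ≤ C₁) (hC₂ : 0 ≤ C₂) (hC : C₁ + C₂ < ν) {h₀ : ℝ → E} (hh₀ : Continuous h₀)
    (hh₀per : Function.Periodic h₀ ω) (hh₀nonneg : 0 ≤ h₀)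
    (hFle : ∀ t x y, 0 ≤ x → 0 ≤ y → F t x y ≤ C₁ • x + C₂ • y + h₀ t) :
    ∃ u : ℝ → E, Continuous u ∧ 0 ≤ u ∧ Function.Periodic u ω ∧
      IsMildSolution T (fun t ↦ F t (u t) (u (t - τ))) u := by
  obtain ⟨h, hh⟩ := exists_continuousMap_addCircle_forall_coe_eq hh₀ hh₀per
  have hle (f g : C(AddCircle ω, E)) (hfg : ∀ t : ℝ, f t ≤ g t) : f ≤ g :=
    ContinuousMap.le_def.mpr (QuotientAddGroup.mk_surjective.forall.mpr hfg)
  obtain ⟨w, hw, hfix⟩ := H.exists_nonneg_periodicSolution_delayFeedback_add_eq hT hC₁ hC₂ hC τ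
    (hle 0 h fun t ↦ (hh₀nonneg t).trans_eq (hh t).symm)
  obtain ⟨G, hG, hGF⟩ := exists_continuousOn_forall_coe_eq_delay hF hFper τ
  have hGmaps : MapsTo G (Icc 0 w) (Icc 0 (delayFeedback C₁ C₂ τ w + h)) := fun v ⟨hv, hvw⟩ ↦ by
    refine ⟨hle _ _ fun t ↦ ?_, hle _ _ fun t ↦ ?_⟩
    · rw [hGF v hv]
      exact hF₀ _ _ _ (hv _) (hv _)
    · rw [hGF v hv, ContinuousMap.add_apply, hh, delayFeedback_apply, ← AddCircle.coe_sub]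
      refine (hFle _ _ _ (hv _) (hv _)).trans ?_
      gcongr
      exacts [hvw _, hvw _]
  obtain ⟨v, ⟨hv, -⟩, hQv⟩ := exists_fixedPoint_of_isCompactOperator
    (fun f g hf hfg ↦ continuousMap_norm_le_mul_norm_of_le hN hnormal hf hfg)
    (H.isCompactOperator_periodicSolution hcompact) (fun f hf ↦ H.periodicSolution_nonneg hT hf)
    hw hfix.le (hG.mono Icc_subset_Ici_self) hGmaps
  refine ⟨fun t ↦ v t, v.continuous.comp (AddCircle.continuous_mk' ω), fun t ↦ hv t,
    fun t ↦ by simp, ?_⟩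
  simpa only [hQv, hGF v hv] using H.isMildSolution_periodicSolution (G v)

end IsExpStableSemigroup

/-- **Theorem 1.1.** Under the sublinear order condition (H1) with
`C₁ + C₂ < ν = |ν₀|`, the delay evolution equation
`u'(t) + A u(t) = F(t, u(t), u(t - τ))` has at least one positive ω-periodic
mild solution. The order `x ≤ y` is encoded as `y - x ∈ K`. -/
theorem stmt6
    {E : Type*} [NormedAddCommGroup E] [NormedSpace ℝ E] [CompleteSpace E]
    -- the positive cone `K`:
    (K : Set E) (hKclosed : IsClosed K)
    (hKadd : ∀ x ∈ K, ∀ y ∈ K, x + y ∈ K)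
    (hKsmul : ∀ c : ℝ, 0 ≤ c → ∀ x ∈ K, c • x ∈ K)
    (hKpointed : ∀ x : E, x ∈ K → -x ∈ K → x = 0)
    -- `K` is normal with normal constant `N`:
    (N : ℝ) (hN : 0 < N)
    (hKnormal : ∀ x y : E, x ∈ K → y - x ∈ K → ‖x‖ ≤ N * ‖y‖)
    -- `T` is a positive compact C₀-semigroup with `‖T t‖ ≤ M e^{-ν t}`:
    (T : ℝ → E →L[ℝ] E) (M ν : ℝ) (hM : 1 ≤ M) (hν : 0 < ν)
    (hT0 : T 0 = ContinuousLinearMap.id ℝ E)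
    (hTsemi : ∀ t s : ℝ, 0 ≤ t → 0 ≤ s → T (t + s) = (T t).comp (T s))
    (hTcont : ∀ x : E, ContinuousOn (fun t : ℝ => T t x) (Set.Ici (0 : ℝ)))
    (hTnorm : ∀ t : ℝ, 0 ≤ t → ‖T t‖ ≤ M * Real.exp (-ν * t))
    (hTpos : ∀ t : ℝ, 0 ≤ t → Set.MapsTo (T t) K K)
    (hTcompact : ∀ t : ℝ, 0 < t → IsCompactOperator (T t))
    (ω τ : ℝ) (hω : 0 < ω) (hτ : 0 < τ)
    -- `F : ℝ × K × K → K` continuous and ω-periodic in `t`: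
    (F : ℝ → E → E → E)
    (hFcont : ContinuousOn (fun p : ℝ × E × E => F p.1 p.2.1 p.2.2)
      (Set.univ ×ˢ K ×ˢ K))
    (hFmaps : ∀ t : ℝ, ∀ x ∈ K, ∀ y ∈ K, F t x y ∈ K)
    (hFper : ∀ t : ℝ, ∀ x ∈ K, ∀ y ∈ K, F (t + ω) x y = F t x y)
    -- (H1):
    (C₁ C₂ : ℝ) (hC₁ : 0 < C₁) (hC₂ : 0 < C₂) (hC : C₁ + C₂ < ν)
    (h₀ : ℝ → E) (hh₀cont : Continuous h₀) (hh₀per : ∀ t : ℝ, h₀ (t + ω) = h₀ t)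
    (hh₀pos : ∀ t : ℝ, h₀ t ∈ K)
    (hH1 : ∀ t : ℝ, ∀ x ∈ K, ∀ y ∈ K,
      C₁ • x + C₂ • y + h₀ t - F t x y ∈ K) :
    -- there exists a positive ω-periodic mild solution:
    ∃ u : ℝ → E, Continuous u ∧ (∀ t : ℝ, u t ∈ K) ∧ (∀ t : ℝ, u (t + ω) = u t) ∧
      ∀ s t : ℝ, s ≤ t →
        u t = T (t - s) (u s) + ∫ r in s..t, T (t - r) (F r (u r) (u (r - τ))) := by
  obtain ⟨_, _, _, _, rfl⟩ := exists_partialOrder_Ici_zero_eq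
    (by simpa using hKsmul 0 le_rfl _ (hh₀pos 0)) hKclosed hKadd hKsmul hKpointed
  have : Fact (0 < ω) := ⟨hω⟩
  have H : IsExpStableSemigroup T M ν := ⟨hν, hT0, hTsemi, hTcont, hTnorm⟩
  exact H.exists_periodic_isMildSolution hTpos hTcompact hN.le
    (fun x y hx hxy ↦ hKnormal x y hx (sub_nonneg.mpr hxy)) hFcont
    (fun t x y hx hy ↦ hFmaps t x hx y hy) (fun t x y hx hy ↦ hFper t x hx y hy) τ hC₁.le hC₂.le hC
    hh₀cont hh₀per hh₀pos fun t x y hx hy ↦ sub_nonneg.mp (hH1 t x hx y hy)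
end

section
/- Let E be a real ordered Banach space with closed positive cone K, and let T(t) (t ≥ 0) be a positive compact C₀-semigroup on E with ‖T(t)‖ ≤ M e^{−ν t} for all t ≥ 0 (M ≥ 1, ν > 0). Let ω, τ > 0 and let F : ℝ × K × K → K be continuous, ω-periodic in its first argument, and mapping bounded sets into bounded sets. Then the operator Q defined on K_C by (Qu)(t) = (I − T(ω))⁻¹ ∫_{t−ω}^t T(t − s) F(s, u(s), u(s − τ)) ds maps K_C into K_C, is continuous, and maps every bounded subset of K_C onto a relatively compact subset of C_ω(ℝ, E); in particular Q : K_C → K_C is a compact operator. -/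
open BoundedContinuousFunction

/-!
Substituting `s ↦ t - s` turns the integral into the convolution `∫₀^ω T(s) g(t - s) ds` of the
semigroup with `g(s) = F(s, u(s), u(s - τ))`. Cutting off its first `δ` units of time changes it by
`O(δ)` and leaves `T(δ)` applied to a bounded vector, so compactness of `T(δ)` makes the set of all
values of these convolutions totally bounded. A shift of time by `h` acts on the convolution as
`T(h)` up to an error `O(h)`, and `T(h) → I` uniformly on compact sets; hence the convolutions are
equicontinuous, and Arzelà–Ascoli on the circle `ℝ / ωℤ` applies. The inverse of `I - T(ω)`
preserves the cone because it is the limit of the Neumann series `∑ T(ω)ⁿ = ∑ T(nω)`.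
-/

section

open Filter Function MeasureTheory Metric Set Topology
open scoped NNReal

theorem totallyBounded_of_forall_subset_thickening {α : Type*} [PseudoMetricSpace α] {A : Set α}
    (h : ∀ ε > 0, ∃ C : Set α, TotallyBounded C ∧ A ⊆ thickening ε C) : TotallyBounded A := by
  rw [Metric.totallyBounded_iff]
  intro ε hε
  obtain ⟨C, hC, hAC⟩ := h (ε / 2) (half_pos hε)
  obtain ⟨N, hN, hCN⟩ := Metric.totallyBounded_iff.1 hC (ε / 2) (half_pos hε)
  refine ⟨N, hN, fun x hx => ?_⟩
  obtain ⟨y, hy, hxy⟩ := mem_thickening_iff.1 (hAC hx)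
  obtain ⟨z, hz, hyz⟩ := mem_iUnion₂.1 (hCN hy)
  exact mem_iUnion₂.2 ⟨z, hz, (dist_triangle x y z).trans_lt (by linarith [mem_ball.1 hyz])⟩

theorem isCompact_closure_range_of_periodic_of_equicontinuous {ι α : Type*} [MetricSpace α] {p : ℝ}
    (hp : 0 < p) {f : ι → ℝ →ᵇ α} (hper : ∀ i, Periodic (f i) p) {C : Set α} (hC : IsCompact C)
    (hfC : ∀ i t, f i t ∈ C) (hf : Equicontinuous fun i => ⇑(f i)) :
    IsCompact (closure (range f)) := by
  have : Fact (0 < p) := ⟨hp⟩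
  let q : C(ℝ, AddCircle p) := ⟨(↑), AddCircle.continuous_mk' p⟩
  let lift (i : ι) : AddCircle p →ᵇ α :=
    mkOfCompact ⟨(hper i).lift, (f i).continuous.quotient_liftOn' _⟩
  have hlift_compact : IsCompact (closure (range lift)) := by
    refine arzela_ascoli C hC _ ?_ fun x U hU => ?_
    · rintro _ x ⟨i, rfl⟩
      induction x using QuotientAddGroup.induction_on with
      | H t => exact hfC i t
    · induction x using QuotientAddGroup.induction_on with
      | H t =>
        rw [QuotientAddGroup.nhds_eq, eventually_map]
        filter_upwards [hf t U hU] with r hr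
        rintro ⟨_, i, rfl⟩
        exact hr i
  refine (hlift_compact.image (continuous_compContinuous q)).closure_of_subset ?_
  rintro _ ⟨i, rfl⟩
  exact ⟨lift i, subset_closure (mem_range_self i), rfl⟩

theorem tendstoUniformly_nhdsWithin_of_periodic {X α : Type*} [TopologicalSpace X] [UniformSpace α]
    {G : X → ℝ → α} {s : Set X} {x : X} {p : ℝ} (hp : 0 < p) (hx : x ∈ s)
    (hG : ContinuousOn (uncurry G) (s ×ˢ univ)) (hper : ∀ y ∈ s, Periodic (G y) p) :
    TendstoUniformly G (G x) (𝓝[s] x) := by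
  intro U hU
  obtain ⟨v, hv, hvU⟩ := (isCompact_Icc (a := 0) (b := p)).mem_uniformity_of_prod
    (hG.mono (prod_mono_right (subset_univ _))) hx (tendsto_swap_uniformity hU)
  filter_upwards [hv, self_mem_nhdsWithin] with y hyv hys t
  have hpair : Periodic (fun t => (G x t, G y t)) p := fun t =>
    Prod.ext (hper x hx t) (hper y hys t)
  obtain ⟨r, hr, hr_eq⟩ := hpair.exists_mem_Ico₀ hp t
  rw [hr_eq]
  exact hvU y hyv r (Ico_subset_Icc_self hr)

theorem tendsto_geom_sum_of_one_sub_mul_eq_one {R : Type*} [Ring R] [TopologicalSpace R]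
    [IsTopologicalRing R] {a s : R} (hs : (1 - a) * s = 1)
    (ha : Tendsto (fun n : ℕ => a ^ n) atTop (𝓝 0)) :
    Tendsto (fun n => ∑ i ∈ Finset.range n, a ^ i) atTop (𝓝 s) := by
  have hsum (n : ℕ) : ∑ i ∈ Finset.range n, a ^ i = s - a ^ n * s :=
    calc ∑ i ∈ Finset.range n, a ^ i = (∑ i ∈ Finset.range n, a ^ i) * ((1 - a) * s) := by
          rw [hs, mul_one]
      _ = s - a ^ n * s := by rw [← mul_assoc, geom_sum_mul_neg, sub_mul, one_mul]
  simpa [hsum] using tendsto_const_nhds.sub (ha.mul_const s)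

section Cone

variable {E : Type*} [NormedAddCommGroup E] [NormedSpace ℝ E] {K : ConvexCone ℝ E}

theorem mapsTo_of_one_sub_mul_eq_one (hK : IsClosed (K : Set E)) {A S : E →L[ℝ] E}
    (hS : (1 - A) * S = 1) (hA : Tendsto (fun n : ℕ => A ^ n) atTop (𝓝 0)) (hAK : MapsTo A K K) :
    MapsTo S K K := by
  intro x hx
  have hpow (n : ℕ) : (A ^ n) x ∈ K := by
    rw [FunLike.coe_pow_eq_iterate]
    exact hAK.iterate n hx
  have hsum (n : ℕ) : (∑ i ∈ Finset.range (n + 1), A ^ i) x ∈ K := by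
    rw [_root_.sum_apply]
    exact Finset.sum_induction_nonempty _ (· ∈ K) (fun _ _ hy hz => K.add_mem hy hz)
      Finset.nonempty_range_add_one fun i _ => hpow i
  have hlim : Tendsto (fun n => (∑ i ∈ Finset.range (n + 1), A ^ i) x) atTop (𝓝 (S x)) :=
    (((ContinuousLinearMap.apply ℝ E x).continuous.tendsto S).comp
      (tendsto_geom_sum_of_one_sub_mul_eq_one hS hA)).comp (tendsto_add_atTop_nat 1)
  exact hK.mem_of_tendsto hlim (Eventually.of_forall hsum)

theorem intervalIntegral_mem_convexCone [CompleteSpace E] (hK : IsClosed (K : Set E)) {f : ℝ → E}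
    {a b : ℝ} (hab : a < b) (hf : IntervalIntegrable f volume a b) (hfK : ∀ s ∈ Ioc a b, f s ∈ K) :
    ∫ s in a..b, f s ∈ K := by
  have havg : (⨍ s in Ioc a b, f s) ∈ (K : Set E) :=
    K.convex.set_average_mem hK (by simp [hab]) (by simp)
      (ae_restrict_of_forall_mem measurableSet_Ioc hfK) hf.1
  have hscale := K.smul_mem (sub_pos.2 hab) havg
  rwa [← uIoc_of_le hab.le, interval_average_eq, smul_inv_smul₀ (sub_pos.2 hab).ne'] at hscale

end Cone

/-- The convolution `∫_a^b T(s) g(t - s) ds` of a family of operators, restricted to the time window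
`[a, b]`, with an input `g`. For a semigroup `T` and `a = 0` it is the response at time `t` to the
input received during the last `b` units of time. -/
noncomputable def windowConv {E : Type*} [NormedAddCommGroup E] [NormedSpace ℝ E]
    (T : ℝ → E →L[ℝ] E) (a b : ℝ) (g : ℝ → E) (t : ℝ) : E :=
  ∫ s in a..b, T s (g (t - s))

/-- `T` is a C₀-semigroup: a strongly continuous one-parameter semigroup of bounded operators. The
family is indexed by all of `ℝ`, and its values at negative times are unconstrained. -/
structure IsC0Semigroup {E : Type*} [NormedAddCommGroup E] [NormedSpace ℝ E]
    (T : ℝ → E →L[ℝ] E) : Prop where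
  map_zero : T 0 = ContinuousLinearMap.id ℝ E
  map_add : ∀ t s : ℝ, 0 ≤ t → 0 ≤ s → T (t + s) = (T t).comp (T s)
  continuousOn : ∀ x : E, ContinuousOn (fun t => T t x) (Ici 0)

section Convolution

variable {E : Type*} [NormedAddCommGroup E] [NormedSpace ℝ E] {T : ℝ → E →L[ℝ] E} {g : ℝ → E}
  {a b t : ℝ}

theorem integral_comp_sub_eq_windowConv :
    ∫ s in (t - b)..t, T (t - s) (g s) = windowConv T 0 b g t := by
  have h := intervalIntegral.integral_comp_sub_left (a := t - b) (b := t)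
    (fun s => T s (g (t - s))) t
  simpa only [sub_sub_cancel, sub_self, windowConv] using h

theorem norm_windowConv_le {M R : ℝ} (hab : a ≤ b) (hM : ∀ s ∈ Icc a b, ‖T s‖ ≤ M)
    (hg : ∀ s, ‖g s‖ ≤ R) : ‖windowConv T a b g t‖ ≤ M * R * (b - a) := by
  have hbound : ∀ s ∈ uIoc a b, ‖T s (g (t - s))‖ ≤ M * R := fun s hs => by
    rw [uIoc_of_le hab] at hs
    exact (T s).le_of_opNorm_le_of_le (hM s (Ioc_subset_Icc_self hs)) (hg _)
  simpa only [abs_of_nonneg (sub_nonneg.2 hab), windowConv] using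
    intervalIntegral.norm_integral_le_of_norm_le_const hbound

theorem periodic_windowConv {p : ℝ} (hg : Periodic g p) :
    Periodic (windowConv T a b g) p := by
  intro t
  simp only [windowConv, add_sub_right_comm, hg _]

end Convolution

namespace IsC0Semigroup

variable {E : Type*} [NormedAddCommGroup E] [NormedSpace ℝ E] {T : ℝ → E →L[ℝ] E}

theorem map_natCast_mul (hT : IsC0Semigroup T) {t : ℝ} (ht : 0 ≤ t) (n : ℕ) :
    T (n * t) = T t ^ n := by
  induction n with
  | zero => simpa [ContinuousLinearMap.one_def] using hT.map_zero
  | succ n ih =>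
    rw [Nat.cast_add_one, add_one_mul, hT.map_add _ _ (by positivity) ht, ih, pow_succ]
    rfl

theorem tendsto_pow_zero_of_norm_le_exp (hT : IsC0Semigroup T) {M ν ω : ℝ} (hν : 0 < ν) (hω : 0 < ω)
    (hdecay : ∀ t, 0 ≤ t → ‖T t‖ ≤ M * Real.exp (-ν * t)) :
    Tendsto (fun n : ℕ => T ω ^ n) atTop (𝓝 0) := by
  have hexp : Tendsto (fun n : ℕ => M * Real.exp (-ν * (n * ω))) atTop (𝓝 0) := by
    have harg : Tendsto (fun n : ℕ => -ν * (n * ω)) atTop atBot :=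
      (tendsto_natCast_atTop_atTop.atTop_mul_const hω).const_mul_atTop_of_neg (neg_neg_of_pos hν)
    simpa using (Real.tendsto_exp_atBot.comp harg).const_mul M
  refine squeeze_zero_norm (fun n => ?_) hexp
  rw [← hT.map_natCast_mul hω.le]
  exact hdecay _ (by positivity)

section Banach

variable [CompleteSpace E]

theorem exists_norm_le (hT : IsC0Semigroup T) (b : ℝ) : ∃ M : ℝ≥0, ∀ t ∈ Icc 0 b, ‖T t‖ ≤ M := by
  obtain ⟨C, hC⟩ := banach_steinhaus (g := fun t : Icc 0 b => T t) fun x => by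
    obtain ⟨C, hC⟩ := isCompact_Icc.exists_bound_of_continuousOn
      ((hT.continuousOn x).mono (Icc_subset_Ici_self : Icc 0 b ⊆ Ici 0))
    exact ⟨C, fun t => hC t t.2⟩
  exact ⟨C.toNNReal, fun t ht => (hC ⟨t, ht⟩).trans C.le_coe_toNNReal⟩

theorem continuousOn_uncurry (hT : IsC0Semigroup T) :
    ContinuousOn (uncurry fun t x => T t x) (Ici 0 ×ˢ univ) := by
  refine continuousOn_of_locally_continuousOn fun p _ =>
    ⟨Iio (p.1 + 1) ×ˢ univ, isOpen_Iio.prod isOpen_univ, ⟨lt_add_one p.1, mem_univ _⟩, ?_⟩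
  rw [prod_inter_prod, univ_inter]
  obtain ⟨M, hM⟩ := hT.exists_norm_le (p.1 + 1)
  refine continuousOn_prod_of_continuousOn_lipschitzOnWith' _ M (fun t ht => ?_) fun x _ =>
    (hT.continuousOn x).mono inter_subset_left
  exact ((T t).lipschitz.weaken (hM t ⟨ht.1, ht.2.le⟩)).lipschitzOnWith

theorem eventually_dist_map_lt (hT : IsC0Semigroup T) {C : Set E} (hC : IsCompact C) {ε : ℝ}
    (hε : 0 < ε) : ∀ᶠ h in 𝓝[≥] 0, ∀ x ∈ C, dist (T h x) x < ε := by
  obtain ⟨v, hv, hvε⟩ := hC.mem_uniformity_of_prod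
    (hT.continuousOn_uncurry.mono (prod_mono_right (subset_univ C))) self_mem_Ici
    (dist_mem_uniformity hε)
  filter_upwards [hv] with h hh x hx
  simpa [hT.map_zero] using hvε h hh x hx

variable {g : ℝ → E} {a b t : ℝ}

theorem intervalIntegrable (hT : IsC0Semigroup T) (hg : Continuous g) (t : ℝ) (ha : 0 ≤ a)
    (hb : 0 ≤ b) : IntervalIntegrable (fun s => T s (g (t - s))) volume a b := by
  have hcont : ContinuousOn (fun s => T s (g (t - s))) (Ici 0) :=
    hT.continuousOn_uncurry.comp (f := fun s => (s, g (t - s))) (by fun_prop)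
      fun s hs => ⟨hs, mem_univ _⟩
  exact (hcont.mono fun s hs => (le_inf ha hb).trans hs.1).intervalIntegrable

theorem windowConv_add_adjacent (hT : IsC0Semigroup T) (hg : Continuous g) {c : ℝ} (ha : 0 ≤ a)
    (hb : 0 ≤ b) (hc : 0 ≤ c) :
    windowConv T a b g t + windowConv T b c g t = windowConv T a c g t :=
  intervalIntegral.integral_add_adjacent_intervals (hT.intervalIntegrable hg t ha hb)
    (hT.intervalIntegrable hg t hb hc)

theorem map_windowConv (hT : IsC0Semigroup T) (hg : Continuous g) {h : ℝ} (ha : 0 ≤ a) (hb : 0 ≤ b)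
    (hh : 0 ≤ h) :
    T h (windowConv T a b g t) = windowConv T (a + h) (b + h) g (t + h) := by
  have hcomp : ∀ s ∈ uIcc a b, T h (T s (g (t - s))) = T (s + h) (g (t + h - (s + h))) :=
    fun s hs => by
      rw [add_comm s h, hT.map_add h s hh ((le_inf ha hb).trans hs.1), add_comm h s,
        add_sub_add_right_eq_sub, ContinuousLinearMap.comp_apply]
  rw [windowConv, ← ContinuousLinearMap.intervalIntegral_comp_comm _
    (hT.intervalIntegrable hg t ha hb), intervalIntegral.integral_congr hcomp]
  exact intervalIntegral.integral_comp_add_right (fun s => T s (g (t + h - s))) h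

theorem windowConv_sub_input (hT : IsC0Semigroup T) {f : ℝ → E} (hf : Continuous f)
    (hg : Continuous g) (ha : 0 ≤ a) (hb : 0 ≤ b) :
    windowConv T a b (f - g) t = windowConv T a b f t - windowConv T a b g t := by
  simp only [windowConv, Pi.sub_apply, map_sub]
  exact intervalIntegral.integral_sub (hT.intervalIntegrable hf t ha hb)
    (hT.intervalIntegrable hg t ha hb)

theorem windowConv_mem_convexCone (hT : IsC0Semigroup T) {K : ConvexCone ℝ E}
    (hK : IsClosed (K : Set E)) (hTK : ∀ t, 0 ≤ t → MapsTo (T t) K K) (hg : Continuous g)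
    (hgK : ∀ s, g s ∈ K) (ha : 0 ≤ a) (hab : a < b) : windowConv T a b g t ∈ K :=
  intervalIntegral_mem_convexCone hK hab (hT.intervalIntegrable hg t ha (ha.trans hab.le))
    fun s hs => hTK s (ha.trans hs.1.le) (hgK _)

theorem tendstoUniformly_windowConv (hT : IsC0Semigroup T) {ι : Type*} {l : Filter ι}
    {f : ι → ℝ → E} (hf : ∀ᶠ i in l, Continuous (f i)) (hg : Continuous g)
    (hfg : TendstoUniformly f g l) (ha : 0 ≤ a) (hab : a ≤ b) :
    TendstoUniformly (fun i => windowConv T a b (f i)) (windowConv T a b g) l := by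
  rw [Metric.tendstoUniformly_iff] at hfg ⊢
  intro ε hε
  obtain ⟨M, hM⟩ := hT.exists_norm_le b
  obtain ⟨c, hcε, hc⟩ : ∃ c : ℝ, M * c * (b - a) < ε ∧ 0 < c := by
    have hlim : Tendsto (fun c : ℝ => M * c * (b - a)) (𝓝 0) (𝓝 0) :=
      Continuous.tendsto' (by fun_prop) 0 0 (by simp)
    exact (((hlim.eventually_lt_const hε).filter_mono nhdsWithin_le_nhds).and
      self_mem_nhdsWithin).exists (f := 𝓝[>] 0)
  filter_upwards [hf, hfg c hc] with i hfi hi t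
  rw [dist_eq_norm, ← hT.windowConv_sub_input hg hfi ha (ha.trans hab)]
  refine (norm_windowConv_le hab (fun s hs => hM s ⟨ha.trans hs.1, hs.2⟩) fun s => ?_).trans_lt hcε
  rw [Pi.sub_apply, ← dist_eq_norm]
  exact (hi s).le

theorem dist_windowConv_map_windowConv_le (hT : IsC0Semigroup T) {M R δ : ℝ}
    (hM : ∀ s ∈ Icc 0 b, ‖T s‖ ≤ M) (hg : Continuous g) (hgR : ∀ s, ‖g s‖ ≤ R) (hδ : 0 ≤ δ)
    (hδb : δ ≤ b) :
    dist (windowConv T 0 b g t) (T δ (windowConv T 0 (b - δ) g (t - δ))) ≤ M * R * δ := by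
  have hsplit : windowConv T 0 b g t - T δ (windowConv T 0 (b - δ) g (t - δ)) =
      windowConv T 0 δ g t := by
    rw [hT.map_windowConv hg le_rfl (sub_nonneg.2 hδb) hδ, zero_add, sub_add_cancel, sub_add_cancel,
      sub_eq_iff_eq_add, hT.windowConv_add_adjacent hg le_rfl hδ (hδ.trans hδb)]
  rw [dist_eq_norm, hsplit]
  simpa only [sub_zero] using norm_windowConv_le hδ (fun s hs => hM s ⟨hs.1, hs.2.trans hδb⟩) hgR

theorem dist_windowConv_add_map_windowConv_le (hT : IsC0Semigroup T) {M R h : ℝ} (hb : 0 ≤ b)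
    (hM : ∀ s ∈ Icc 0 (b + h), ‖T s‖ ≤ M) (hg : Continuous g) (hgR : ∀ s, ‖g s‖ ≤ R) (hh : 0 ≤ h) :
    dist (windowConv T 0 b g (t + h)) (T h (windowConv T 0 b g t)) ≤ 2 * (M * R * h) := by
  have hbh : 0 ≤ b + h := add_nonneg hb hh
  have hsplit : windowConv T 0 b g (t + h) - T h (windowConv T 0 b g t) =
      windowConv T 0 h g (t + h) - windowConv T b (b + h) g (t + h) := by
    rw [hT.map_windowConv hg le_rfl hb hh, zero_add, sub_eq_sub_iff_add_eq_add,
      hT.windowConv_add_adjacent hg le_rfl hb hbh, hT.windowConv_add_adjacent hg le_rfl hh hbh]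
  have hfirst : ‖windowConv T 0 h g (t + h)‖ ≤ M * R * (h - 0) :=
    norm_windowConv_le hh (fun s hs => hM s ⟨hs.1, hs.2.trans (le_add_of_nonneg_left hb)⟩) hgR
  have hlast : ‖windowConv T b (b + h) g (t + h)‖ ≤ M * R * (b + h - b) :=
    norm_windowConv_le (le_add_of_nonneg_right hh) (fun s hs => hM s ⟨hb.trans hs.1, hs.2⟩) hgR
  rw [dist_eq_norm, hsplit]
  exact (norm_sub_le _ _).trans (by linarith)

section Compact

variable {ι : Type*} {f : ι → ℝ → E} {R : ℝ}

theorem isCompact_closure_range_windowConv (hT : IsC0Semigroup T)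
    (hTc : ∀ t, 0 < t → IsCompactOperator (T t)) (hb : 0 < b) (hf : ∀ i, Continuous (f i))
    (hfR : ∀ i s, ‖f i s‖ ≤ R) :
    IsCompact (closure (range fun p : ι × ℝ => windowConv T 0 b (f p.1) p.2)) := by
  obtain ⟨M, hM⟩ := hT.exists_norm_le b
  refine TotallyBounded.isCompact_of_isClosed (TotallyBounded.closure ?_) isClosed_closure
  refine totallyBounded_of_forall_subset_thickening fun ε hε => ?_
  obtain ⟨δ, hδε, hδ, hδb⟩ : ∃ δ : ℝ, M * R * δ < ε ∧ 0 < δ ∧ δ < b := by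
    have hlim : Tendsto (fun δ : ℝ => M * R * δ) (𝓝 0) (𝓝 0) :=
      Continuous.tendsto' (by fun_prop) 0 0 (mul_zero _)
    exact (((hlim.eventually_lt_const hε).filter_mono nhdsWithin_le_nhds).and
      (Ioo_mem_nhdsGT hb)).exists
  have hbδ : 0 ≤ b - δ := sub_nonneg.2 hδb.le
  refine ⟨T δ '' closedBall 0 (M * R * (b - δ)),
    ((hTc δ hδ).isCompact_closure_image_closedBall _).totallyBounded.subset subset_closure, ?_⟩
  rintro _ ⟨⟨i, t⟩, rfl⟩
  refine mem_thickening_iff.2 ⟨_, mem_image_of_mem _ (mem_closedBall_zero_iff.2 ?_),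
    (hT.dist_windowConv_map_windowConv_le hM (hf i) (hfR i) hδ.le hδb.le).trans_lt hδε⟩
  simpa only [sub_zero] using norm_windowConv_le hbδ
    (fun s hs => hM s ⟨hs.1, hs.2.trans (sub_le_self b hδ.le)⟩) (hfR i)

theorem eventually_dist_windowConv_add_lt (hT : IsC0Semigroup T)
    (hTc : ∀ t, 0 < t → IsCompactOperator (T t)) (hb : 0 < b) (hf : ∀ i, Continuous (f i))
    (hfR : ∀ i s, ‖f i s‖ ≤ R) {ε : ℝ} (hε : 0 < ε) :
    ∀ᶠ h in 𝓝[≥] 0, ∀ i t,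
      dist (windowConv T 0 b (f i) (t + h)) (windowConv T 0 b (f i) t) < ε := by
  obtain ⟨M, hM⟩ := hT.exists_norm_le (b + 1)
  have hC := hT.isCompact_closure_range_windowConv hTc hb hf hfR
  have herror : Tendsto (fun h : ℝ => 2 * (M * R * h)) (𝓝 0) (𝓝 0) :=
    Continuous.tendsto' (by fun_prop) 0 0 (by simp)
  filter_upwards [nhdsWithin_le_nhds (herror.eventually_lt_const (half_pos hε)),
    Ico_mem_nhdsGE one_pos, hT.eventually_dist_map_lt hC (half_pos hε)] with h hherror hh hhC i t
  have hshift := hT.dist_windowConv_add_map_windowConv_le (t := t) hb.le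
    (fun s hs => hM s ⟨hs.1, hs.2.trans (add_le_add_right hh.2.le b)⟩) (hf i) (hfR i) hh.1
  have hmap := hhC _ (subset_closure (mem_range_self (i, t)))
  exact (dist_triangle _ _ _).trans_lt (by linarith)

theorem uniformEquicontinuous_windowConv (hT : IsC0Semigroup T)
    (hTc : ∀ t, 0 < t → IsCompactOperator (T t)) (hb : 0 < b) (hf : ∀ i, Continuous (f i))
    (hfR : ∀ i s, ‖f i s‖ ≤ R) : UniformEquicontinuous fun i => windowConv T 0 b (f i) := by
  rw [Metric.uniformEquicontinuous_iff]
  intro ε hε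
  obtain ⟨δ, hδ, hδε⟩ := mem_nhdsGE_iff_exists_Ico_subset.1
    (hT.eventually_dist_windowConv_add_lt hTc hb hf hfR hε)
  have hle (x y : ℝ) (hxy : x ≤ y) (hdist : dist x y < δ) (i : ι) :
      dist (windowConv T 0 b (f i) x) (windowConv T 0 b (f i) y) < ε := by
    rw [dist_comm, Real.dist_eq] at hdist
    simpa only [dist_comm, add_sub_cancel] using
      hδε ⟨sub_nonneg.2 hxy, (le_abs_self _).trans_lt hdist⟩ i x
  refine ⟨δ, hδ, fun x y hdist i => ?_⟩
  rcases le_total x y with hxy | hyx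
  · exact hle x y hxy hdist i
  · rw [dist_comm] at hdist ⊢
    exact hle y x hyx hdist i

theorem isCompact_closure_range_of_eq_comp_windowConv (hT : IsC0Semigroup T)
    (hTc : ∀ t, 0 < t → IsCompactOperator (T t)) (hb : 0 < b) (hf : ∀ i, Continuous (f i))
    (hfR : ∀ i s, ‖f i s‖ ≤ R) (hper : ∀ i, Periodic (f i) b) {G : Type*} [NormedAddCommGroup G]
    [NormedSpace ℝ G] {S : E →L[ℝ] G} {v : ι → ℝ →ᵇ G}
    (hv : ∀ i, ⇑(v i) = S ∘ windowConv T 0 b (f i)) : IsCompact (closure (range v)) := by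
  have hC := hT.isCompact_closure_range_windowConv hTc hb hf hfR
  have hequi := hT.uniformEquicontinuous_windowConv hTc hb hf hfR
  refine isCompact_closure_range_of_periodic_of_equicontinuous hb (fun i => ?_)
    (hC.image S.continuous) (fun i t => ?_) ?_
  · rw [hv]
    exact (periodic_windowConv (hper i)).comp S
  · rw [hv]
    exact mem_image_of_mem S (subset_closure (mem_range_self (i, t)))
  · simp only [hv]
    exact UniformEquicontinuous.equicontinuous fun U hU => hequi _ (S.uniformContinuous hU)

end Compact

end Banach

end IsC0Semigroup

section Superposition

/-- The space `K_C` of continuous `ω`-periodic functions with values in `K`. A continuous periodic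
function is bounded, so the ambient space is that of bounded continuous functions. -/
def periodicFunctions {E : Type*} [PseudoMetricSpace E] (K : Set E) (ω : ℝ) : Set (ℝ →ᵇ E) :=
  {u | Periodic u ω ∧ ∀ t, u t ∈ K}

/-- The superposition (Nemytskii) operator `u ↦ F(·, u(·), u(· - τ))` with delay `τ`. -/
def delaySuperposition {E : Type*} (F : ℝ → E → E → E) (τ : ℝ) (u : ℝ → E) (s : ℝ) : E :=
  F s (u s) (u (s - τ))

variable {E : Type*} [PseudoMetricSpace E] {K : Set E} {ω τ : ℝ} {F : ℝ → E → E → E}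

theorem continuousOn_delaySuperposition
    (hF : ContinuousOn (fun p : ℝ × E × E => F p.1 p.2.1 p.2.2) (univ ×ˢ K ×ˢ K)) :
    ContinuousOn (uncurry fun u : ℝ →ᵇ E => delaySuperposition F τ u)
      (periodicFunctions K ω ×ˢ univ) := by
  refine hF.comp (f := fun p : (ℝ →ᵇ E) × ℝ => (p.2, p.1 p.2, p.1 (p.2 - τ)))
    (by fun_prop) ?_
  rintro ⟨u, s⟩ ⟨hu, -⟩
  exact ⟨mem_univ _, hu.2 _, hu.2 _⟩

theorem continuous_delaySuperposition
    (hF : ContinuousOn (fun p : ℝ × E × E => F p.1 p.2.1 p.2.2) (univ ×ˢ K ×ˢ K)) {u : ℝ →ᵇ E}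
    (hu : u ∈ periodicFunctions K ω) : Continuous (delaySuperposition F τ u) :=
  (continuousOn_delaySuperposition hF).comp_continuous (f := fun s => (u, s)) (by fun_prop)
    fun s => ⟨hu, mem_univ s⟩

theorem periodic_delaySuperposition (hF : ∀ t, ∀ x ∈ K, ∀ y ∈ K, F (t + ω) x y = F t x y)
    {u : ℝ →ᵇ E} (hu : u ∈ periodicFunctions K ω) : Periodic (delaySuperposition F τ u) ω := by
  intro s
  simp only [delaySuperposition, add_sub_right_comm, hu.1 _]
  exact hF s _ (hu.2 _) _ (hu.2 _)

end Superposition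

theorem stmt7_general {E : Type*} [NormedAddCommGroup E] [NormedSpace ℝ E] [CompleteSpace E]
    {K : ConvexCone ℝ E} (hK : IsClosed (K : Set E)) {T : ℝ → E →L[ℝ] E} (hT : IsC0Semigroup T)
    (hTK : ∀ t, 0 ≤ t → MapsTo (T t) K K) (hTc : ∀ t, 0 < t → IsCompactOperator (T t))
    {S : E →L[ℝ] E} (hSK : MapsTo S K K) {ω τ : ℝ} (hω : 0 < ω) {F : ℝ → E → E → E}
    (hFcont : ContinuousOn (fun p : ℝ × E × E => F p.1 p.2.1 p.2.2)
      (univ ×ˢ (K : Set E) ×ˢ (K : Set E)))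
    (hFK : ∀ t, ∀ x ∈ K, ∀ y ∈ K, F t x y ∈ K)
    (hFper : ∀ t, ∀ x ∈ K, ∀ y ∈ K, F (t + ω) x y = F t x y)
    (hFbdd : ∀ r : ℝ, ∃ R : ℝ, ∀ t, ∀ x ∈ K, ∀ y ∈ K, ‖x‖ ≤ r → ‖y‖ ≤ r → ‖F t x y‖ ≤ R)
    {Q : (ℝ →ᵇ E) → (ℝ →ᵇ E)}
    (hQ : ∀ u ∈ periodicFunctions (K : Set E) ω, ∀ t,
      Q u t = S (∫ s in (t - ω)..t, T (t - s) (F s (u s) (u (s - τ))))) :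
    MapsTo Q (periodicFunctions K ω) (periodicFunctions K ω) ∧
      ContinuousOn Q (periodicFunctions K ω) ∧
      ∀ B ⊆ periodicFunctions (K : Set E) ω, Bornology.IsBounded B →
        IsCompact (closure (Q '' B)) := by
  set N : (ℝ →ᵇ E) → ℝ → E := fun u => delaySuperposition F τ u
  have hNcont : ∀ u ∈ periodicFunctions (K : Set E) ω, Continuous (N u) := fun u hu =>
    continuous_delaySuperposition hFcont hu
  have hNper : ∀ u ∈ periodicFunctions (K : Set E) ω, Periodic (N u) ω := fun u hu =>
    periodic_delaySuperposition hFper hu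
  have hQconv : ∀ u ∈ periodicFunctions (K : Set E) ω, ⇑(Q u) = S ∘ windowConv T 0 ω (N u) :=
    fun u hu => funext fun t => (hQ u hu t).trans (congrArg S integral_comp_sub_eq_windowConv)
  have hQmaps : MapsTo Q (periodicFunctions K ω) (periodicFunctions K ω) := fun u hu => by
    refine ⟨hQconv u hu ▸ (periodic_windowConv (hNper u hu)).comp S, fun t => ?_⟩
    rw [hQconv u hu]
    exact hSK (hT.windowConv_mem_convexCone hK hTK (hNcont u hu)
      (fun s => hFK s _ (hu.2 _) _ (hu.2 _)) le_rfl hω)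
  refine ⟨hQmaps, fun u hu => ?_, fun B hB hBbdd => ?_⟩
  · rw [ContinuousWithinAt, tendsto_iff_tendstoUniformly, hQconv u hu]
    have hNlim : TendstoUniformly N (N u) (𝓝[periodicFunctions K ω] u) :=
      tendstoUniformly_nhdsWithin_of_periodic hω hu (continuousOn_delaySuperposition hFcont) hNper
    rw [tendstoUniformly_congr (eventually_mem_nhdsWithin.mono hQconv)]
    exact S.uniformContinuous.comp_tendstoUniformly (hT.tendstoUniformly_windowConv
      (eventually_mem_nhdsWithin.mono hNcont) (hNcont u hu) hNlim le_rfl hω.le)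
  · obtain ⟨r, hr⟩ := hBbdd.exists_norm_le
    obtain ⟨R, hR⟩ := hFbdd r
    have hNR (u : B) (s : ℝ) : ‖N u s‖ ≤ R :=
      hR s _ ((hB u.2).2 _) _ ((hB u.2).2 _) ((u.1.norm_coe_le_norm _).trans (hr u u.2))
        ((u.1.norm_coe_le_norm _).trans (hr u u.2))
    rw [image_eq_range]
    exact hT.isCompact_closure_range_of_eq_comp_windowConv hTc hω
      (fun u : B => hNcont u (hB u.2)) hNR (fun u => hNper u (hB u.2)) fun u => hQconv u (hB u.2)

end

/-- The operator
`(Qu)(t) = (I - T ω)⁻¹ ∫_{t-ω}^t T(t-s) F(s, u(s), u(s-τ)) ds`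
maps `K_C` into `K_C`, is continuous on `K_C`, and maps bounded subsets of
`K_C` onto relatively compact subsets; in particular `Q : K_C → K_C` is a
compact operator. Here `K_C` is the set of ω-periodic (bounded) continuous
functions with values in the positive cone `K`. -/
theorem stmt7
    {E : Type*} [NormedAddCommGroup E] [NormedSpace ℝ E] [CompleteSpace E]
    -- the positive cone `K`:
    (K : Set E) (hKclosed : IsClosed K)
    (hKadd : ∀ x ∈ K, ∀ y ∈ K, x + y ∈ K)
    (hKsmul : ∀ c : ℝ, 0 ≤ c → ∀ x ∈ K, c • x ∈ K)
    (hKpointed : ∀ x : E, x ∈ K → -x ∈ K → x = 0)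
    -- `T` is a positive compact C₀-semigroup with `‖T t‖ ≤ M e^{-ν t}`:
    (T : ℝ → E →L[ℝ] E) (M ν : ℝ) (hM : 1 ≤ M) (hν : 0 < ν)
    (hT0 : T 0 = ContinuousLinearMap.id ℝ E)
    (hTsemi : ∀ t s : ℝ, 0 ≤ t → 0 ≤ s → T (t + s) = (T t).comp (T s))
    (hTcont : ∀ x : E, ContinuousOn (fun t : ℝ => T t x) (Set.Ici (0 : ℝ)))
    (hTnorm : ∀ t : ℝ, 0 ≤ t → ‖T t‖ ≤ M * Real.exp (-ν * t))
    (hTpos : ∀ t : ℝ, 0 ≤ t → Set.MapsTo (T t) K K)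
    (hTcompact : ∀ t : ℝ, 0 < t → IsCompactOperator (T t))
    (ω τ : ℝ) (hω : 0 < ω) (hτ : 0 < τ)
    -- `F : ℝ × K × K → K` continuous, ω-periodic in `t`, mapping bounded sets
    -- into bounded sets:
    (F : ℝ → E → E → E)
    (hFcont : ContinuousOn (fun p : ℝ × E × E => F p.1 p.2.1 p.2.2)
      (Set.univ ×ˢ K ×ˢ K))
    (hFmaps : ∀ t : ℝ, ∀ x ∈ K, ∀ y ∈ K, F t x y ∈ K)
    (hFper : ∀ t : ℝ, ∀ x ∈ K, ∀ y ∈ K, F (t + ω) x y = F t x y)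
    (hFbdd : ∀ r : ℝ, ∃ R : ℝ, ∀ t : ℝ, ∀ x ∈ K, ∀ y ∈ K,
      ‖x‖ ≤ r → ‖y‖ ≤ r → ‖F t x y‖ ≤ R)
    -- `S = (I - T ω)⁻¹`:
    (S : E →L[ℝ] E)
    (hS₁ : (ContinuousLinearMap.id ℝ E - T ω).comp S = ContinuousLinearMap.id ℝ E)
    (hS₂ : S.comp (ContinuousLinearMap.id ℝ E - T ω) = ContinuousLinearMap.id ℝ E)
    -- the set `K_C` :
    (KC : Set (BoundedContinuousFunction ℝ E))
    (hKC : KC = {u : BoundedContinuousFunction ℝ E |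
      Function.Periodic u ω ∧ ∀ t : ℝ, u t ∈ K})
    -- the operator `Q` :
    (Q : BoundedContinuousFunction ℝ E → BoundedContinuousFunction ℝ E)
    (hQ : ∀ u ∈ KC, ∀ t : ℝ,
      Q u t = S (∫ s in (t - ω)..t, T (t - s) (F s (u s) (u (s - τ))))) :
    Set.MapsTo Q KC KC ∧
    ContinuousOn Q KC ∧
    ∀ B ⊆ KC, Bornology.IsBounded B → IsCompact (closure (Q '' B)) := by
  subst hKC
  have hT : IsC0Semigroup T := ⟨hT0, hTsemi, hTcont⟩
  exact stmt7_general (K := ⟨K, fun c hc => hKsmul c hc.le, hKadd⟩)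
    hKclosed hT hTpos hTcompact
    (mapsTo_of_one_sub_mul_eq_one hKclosed hS₁ (hT.tendsto_pow_zero_of_norm_le_exp hν hω hTnorm)
      (hTpos ω hω.le)) hω hFcont hFmaps hFper hFbdd hQ
end

section
/- Let E be a real ordered Banach space whose positive cone K is closed and normal with normal constant N, let T(t) (t ≥ 0) be a positive compact C₀-semigroup on E with ‖T(t)‖ ≤ M e^{−ν t} for all t ≥ 0 (M ≥ 1, ν > 0), let ω, τ > 0, and let F : ℝ × K × K → K be continuous with F(t + ω, x, y) = F(t, x, y). Assume (H1): there exist constants C₁, C₂ > 0 with C₁ + C₂ < ν and a continuous ω-periodic function h₀ : ℝ → K such that F(t, x, y) ≤ C₁ x + C₂ y + h₀(t) for all t ∈ ℝ and x, y ∈ K. Then the set Λ(Q) = {u ∈ K_C : u = η Q u for some η ∈ (0, 1)} is bounded in the sup norm, where (Qu)(t) = (I − T(ω))⁻¹ ∫_{t−ω}^t T(t − s) F(s, u(s), u(s − τ)) ds. -/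
/-
Renorm `E` so that `‖T t‖ ≤ e^{-ν t}`; then the positive operator `P` taking `g` to the periodic
mild solution of `du/dt = A u + g` has norm at most `1 / ν`. If `u = η Q u`, then (H1) gives
`u ≤ B u + P h₀` with `B w = P (C₁ w + C₂ w (· - τ))`, a positive operator of norm at most
`(C₁ + C₂) / ν < 1`. The iterates of `w ↦ B w + P h₀` started at `u` stay above `u`, while the upper
limit of their norms is at most `‖P h₀‖ / (1 - (C₁ + C₂) / ν)`; normality of the cone transfers this
bound to `u`.
-/

open MeasureTheory Filter Topology Set
open scoped NNReal BoundedContinuousFunction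

section Cone

variable {X : Type*} [NormedAddCommGroup X] [NormedSpace ℝ X]

theorem integral_mem_properCone [CompleteSpace X] {α : Type*} [MeasurableSpace α] {μ : Measure α}
    (K : ProperCone ℝ X) {f : α → X} (hf : ∀ᵐ a ∂μ, f a ∈ K) : ∫ a, f a ∂μ ∈ K := by
  by_cases hfi : Integrable f μ
  · by_contra hnot
    obtain ⟨φ, hφK, hφneg⟩ := K.hyperplane_separation_point hnot
    rw [← φ.integral_comp_comm hfi] at hφneg
    exact hφneg.not_ge (integral_nonneg_of_ae (hf.mono fun a ha => hφK _ ha))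
  · rw [integral_undef hfi]
    exact zero_mem K

variable {p : Seminorm ℝ X} {B : X →ₗ[ℝ] X} {q : ℝ}

theorem seminorm_iterate_le (hq : 0 ≤ q) (hB : ∀ x, p (B x) ≤ q * p x) (x : X) (n : ℕ) :
    p (B^[n] x) ≤ q ^ n * p x := by
  induction n with
  | zero => simp
  | succ n ih =>
    rw [Function.iterate_succ_apply', pow_succ', mul_assoc]
    exact (hB _).trans (mul_le_mul_of_nonneg_left ih hq)

theorem tendsto_pow_mul_zero (hq : 0 ≤ q) (hq1 : q < 1) (c : ℝ) :
    Tendsto (fun n : ℕ => q ^ n * c) atTop (𝓝 0) := by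
  simpa only [zero_mul] using (tendsto_pow_atTop_nhds_zero_of_lt_one hq hq1).mul_const c

theorem mem_of_sub_map_mem (K : ProperCone ℝ X) (hp : ∀ x, ‖x‖ ≤ p x) (hq : 0 ≤ q) (hq1 : q < 1)
    (hB : ∀ x, p (B x) ≤ q * p x) (hBK : ∀ x ∈ K, B x ∈ K) {x : X} (hx : x - B x ∈ K) :
    x ∈ K := by
  have sub_iterate_mem (n : ℕ) : x - B^[n] x ∈ K := by
    induction n with
    | zero => simp
    | succ n ih =>
      have h := add_mem hx (hBK _ ih)
      rwa [map_sub, sub_add_sub_cancel, ← Function.iterate_succ_apply' (B : X → X)] at h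
  have iterate_tendsto : Tendsto (fun n => B^[n] x) atTop (𝓝 0) :=
    squeeze_zero_norm (fun n => (hp _).trans (seminorm_iterate_le hq hB x n))
      (tendsto_pow_mul_zero hq hq1 _)
  refine K.isClosed.mem_of_tendsto (b := atTop) (f := fun n => x - B^[n] x) ?_
    (.of_forall sub_iterate_mem)
  simpa only [sub_zero] using iterate_tendsto.const_sub x

theorem norm_le_of_map_add_sub_mem (K : PointedCone ℝ X) {N : ℝ} (hN : 0 ≤ N)
    (hK : ∀ x y, x ∈ K → y - x ∈ K → ‖x‖ ≤ N * ‖y‖) (hp : ∀ x, ‖x‖ ≤ p x)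
    (hq : 0 ≤ q) (hq1 : q < 1) (hB : ∀ x, p (B x) ≤ q * p x) (hBK : ∀ x ∈ K, B x ∈ K)
    {u h : X} (hu : u ∈ K) (huB : B u + h - u ∈ K) : ‖u‖ ≤ N * (p h / (1 - q)) := by
  let w (n : ℕ) : X := (fun x => B x + h)^[n] u
  have w_succ (n : ℕ) : w (n + 1) = B (w n) + h := Function.iterate_succ_apply' ..
  have w_sub_mem (n : ℕ) : w n - u ∈ K := by
    induction n with
    | zero => simp [w]
    | succ n ih =>
      have e : w (n + 1) - u = B (w n - u) + (B u + h - u) := by rw [w_succ, map_sub]; abel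
      exact e ▸ add_mem (hBK _ ih) huB
  have p_w_le (n : ℕ) : p (w n) ≤ p h / (1 - q) + q ^ n * p u := by
    induction n with
    | zero =>
      simpa [w] using div_nonneg (apply_nonneg p h) (sub_nonneg.2 hq1.le)
    | succ n ih =>
      have hq' : 1 - q ≠ 0 := (sub_pos.2 hq1).ne'
      calc p (w (n + 1)) ≤ p (B (w n)) + p h := w_succ n ▸ map_add_le_add p _ _
        _ ≤ q * (p h / (1 - q) + q ^ n * p u) + p h := by
          gcongr; exact (hB _).trans (mul_le_mul_of_nonneg_left ih hq)
        _ = p h / (1 - q) + q ^ (n + 1) * p u := by field_simp; ring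
  have norm_u_le (n : ℕ) : ‖u‖ ≤ N * (p h / (1 - q) + q ^ n * p u) :=
    (hK _ _ hu (w_sub_mem n)).trans (mul_le_mul_of_nonneg_left ((hp _).trans (p_w_le n)) hN)
  refine ge_of_tendsto' (x := atTop) ?_ norm_u_le
  simpa only [add_zero] using ((tendsto_pow_mul_zero hq hq1 _).const_add _).const_mul N

end Cone

section SupSeminorm

variable {E : Type*} [NormedAddCommGroup E] [NormedSpace ℝ E]

theorem bddAbove_range_of_le_mul_norm {ι : Sort*} {p : ι → Seminorm ℝ E} {C : ℝ}
    (hp : ∀ i x, p i x ≤ C * ‖x‖) : BddAbove (range p) :=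
  Seminorm.bddAbove_range_iff.2 fun x => ⟨C * ‖x‖, forall_mem_range.2 fun i => hp i x⟩

variable {α : Type*} [TopologicalSpace α] {p : Seminorm ℝ E} {C : ℝ}

/-- The seminorm `w ↦ sup_a p (w a)` on bounded continuous functions. It is only meaningful for `p`
bounded by a multiple of the norm: the supremum of an unbounded family of seminorms is `0`. -/
noncomputable def supSeminorm (α : Type*) [TopologicalSpace α] (p : Seminorm ℝ E) :
    Seminorm ℝ (α →ᵇ E) :=
  ⨆ a, p.comp (BoundedContinuousFunction.evalCLM ℝ a : (α →ᵇ E) →L[ℝ] E).toLinearMap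

theorem bddAbove_range_comp_eval (hp : ∀ x, p x ≤ C * ‖x‖) :
    BddAbove (range fun a : α =>
      p.comp (BoundedContinuousFunction.evalCLM ℝ a : (α →ᵇ E) →L[ℝ] E).toLinearMap) :=
  bddAbove_range_of_le_mul_norm (C := |C|) fun a w => (hp (w a)).trans <|
    mul_le_mul (le_abs_self C) (w.norm_coe_le_norm a) (norm_nonneg _) (abs_nonneg C)

theorem le_supSeminorm (hp : ∀ x, p x ≤ C * ‖x‖) (w : α →ᵇ E) (a : α) :
    p (w a) ≤ supSeminorm α p w :=
  le_ciSup (bddAbove_range_comp_eval hp) a w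

theorem supSeminorm_le [Nonempty α] (hp : ∀ x, p x ≤ C * ‖x‖) {w : α →ᵇ E} {c : ℝ}
    (hw : ∀ a, p (w a) ≤ c) : supSeminorm α p w ≤ c := by
  rw [supSeminorm, Seminorm.iSup_apply (bddAbove_range_comp_eval hp)]
  exact ciSup_le hw

theorem supSeminorm_le_mul_norm [Nonempty α] (hC : 0 ≤ C) (hp : ∀ x, p x ≤ C * ‖x‖)
    (w : α →ᵇ E) : supSeminorm α p w ≤ C * ‖w‖ :=
  supSeminorm_le hp fun a => (hp _).trans (mul_le_mul_of_nonneg_left (w.norm_coe_le_norm a) hC)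

theorem norm_le_supSeminorm [Nonempty α] (hp : ∀ x, p x ≤ C * ‖x‖) (hp' : ∀ x, ‖x‖ ≤ p x)
    (w : α →ᵇ E) : ‖w‖ ≤ supSeminorm α p w :=
  BoundedContinuousFunction.norm_le_of_nonempty.2 fun a => (hp' _).trans (le_supSeminorm hp w a)

end SupSeminorm

section FunctionCone

variable {α E : Type*} [TopologicalSpace α] [NormedAddCommGroup E] [NormedSpace ℝ E]

/-- The cone `K_C` of bounded continuous functions with values in `K`. -/
noncomputable def pointwiseCone (α : Type*) [TopologicalSpace α] (K : ProperCone ℝ E) :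
    ProperCone ℝ (α →ᵇ E) :=
  ⨅ a, K.comap (BoundedContinuousFunction.evalCLM ℝ a)

theorem mem_pointwiseCone {K : ProperCone ℝ E} {w : α →ᵇ E} :
    w ∈ pointwiseCone α K ↔ ∀ a, w a ∈ K :=
  ClosedSubmodule.mem_iInf

theorem norm_le_of_mem_pointwiseCone {K : ProperCone ℝ E} {N : ℝ} (hN : 0 ≤ N)
    (hK : ∀ x y, x ∈ K → y - x ∈ K → ‖x‖ ≤ N * ‖y‖) (v w : α →ᵇ E)
    (hv : v ∈ pointwiseCone α K) (hvw : w - v ∈ pointwiseCone α K) : ‖v‖ ≤ N * ‖w‖ :=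
  (BoundedContinuousFunction.norm_le (by positivity)).2 fun a =>
    (hK _ _ (mem_pointwiseCone.1 hv a) (mem_pointwiseCone.1 hvw a)).trans
      (mul_le_mul_of_nonneg_left (w.norm_coe_le_norm a) hN)

theorem exists_boundedContinuousFunction_of_dominated {K : ProperCone ℝ E} {N : ℝ} (hN : 0 ≤ N)
    (hK : ∀ x y, x ∈ K → y - x ∈ K → ‖x‖ ≤ N * ‖y‖) {f : α → E} (hf : Continuous f)
    (hfK : ∀ a, f a ∈ K) {w : α →ᵇ E} (hfw : ∀ a, w a - f a ∈ K) : ∃ g : α →ᵇ E, ⇑g = f :=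
  ⟨.ofNormedAddCommGroup f hf (N * ‖w‖) fun a => (hK _ _ (hfK a) (hfw a)).trans
    (mul_le_mul_of_nonneg_left (w.norm_coe_le_norm a) hN), rfl⟩

end FunctionCone

section Exponential

theorem exp_neg_mul_lt_one {ν ω : ℝ} (hν : 0 < ν) (hω : 0 < ω) : Real.exp (-ν * ω) < 1 :=
  Real.exp_lt_one_iff.2 (mul_neg_of_neg_of_pos (neg_neg_of_pos hν) hω)

theorem integral_exp_neg_mul {ν : ℝ} (hν : ν ≠ 0) (ω : ℝ) :
    ∫ r in (0 : ℝ)..ω, Real.exp (-ν * r) = (1 - Real.exp (-ν * ω)) / ν := by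
  rw [intervalIntegral.integral_comp_mul_left (fun x => Real.exp x) (neg_ne_zero.2 hν),
    integral_exp, mul_zero, Real.exp_zero, smul_eq_mul]
  field_simp
  ring

end Exponential

section Semigroup

variable {E : Type*} [NormedAddCommGroup E] [NormedSpace ℝ E]

/-- A C₀-semigroup with `‖T t‖ ≤ M e^{-ν t}`. Since `T` is indexed by all of `ℝ`, its values at
negative times are unconstrained junk. -/
structure IsExpBoundedSemigroup (T : ℝ → E →L[ℝ] E) (M ν : ℝ) : Prop where
  apply_zero : T 0 = ContinuousLinearMap.id ℝ E
  apply_add : ∀ t s : ℝ, 0 ≤ t → 0 ≤ s → T (t + s) = (T t).comp (T s)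
  continuousOn_orbit : ∀ x, ContinuousOn (fun t => T t x) (Ici 0)
  opNorm_le : ∀ t : ℝ, 0 ≤ t → ‖T t‖ ≤ M * Real.exp (-ν * t)

/-- The equivalent norm `sup_{r ≥ 0} e^{ν r} ‖T r x‖`, for which the constant `M` of the semigroup
becomes `1`. -/
noncomputable def adaptedSeminorm (T : ℝ → E →L[ℝ] E) (ν : ℝ) : Seminorm ℝ E :=
  ⨆ r : ℝ≥0, (normSeminorm ℝ E).comp (Real.exp (ν * r) • T r).toLinearMap

variable {T : ℝ → E →L[ℝ] E} {M ν : ℝ}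

namespace IsExpBoundedSemigroup

theorem exp_smul_norm_le (hT : IsExpBoundedSemigroup T M ν) {r : ℝ} (hr : 0 ≤ r) (x : E) :
    ‖Real.exp (ν * r) • T r x‖ ≤ M * ‖x‖ := by
  rw [norm_smul, Real.norm_of_nonneg (Real.exp_pos _).le]
  calc Real.exp (ν * r) * ‖T r x‖
      ≤ Real.exp (ν * r) * (M * Real.exp (-ν * r) * ‖x‖) := by
        gcongr; exact (T r).le_of_opNorm_le (hT.opNorm_le r hr) x
    _ = Real.exp (ν * r + -ν * r) * (M * ‖x‖) := by rw [Real.exp_add]; ring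
    _ = M * ‖x‖ := by simp

theorem bddAbove_range_exp_smul (hT : IsExpBoundedSemigroup T M ν) :
    BddAbove (range fun r : ℝ≥0 =>
      (normSeminorm ℝ E).comp (Real.exp (ν * r) • T r).toLinearMap) :=
  bddAbove_range_of_le_mul_norm fun r x => hT.exp_smul_norm_le r.2 x

theorem norm_exp_smul_le (hT : IsExpBoundedSemigroup T M ν) {r : ℝ} (hr : 0 ≤ r) (x : E) :
    ‖Real.exp (ν * r) • T r x‖ ≤ adaptedSeminorm T ν x :=
  le_ciSup hT.bddAbove_range_exp_smul ⟨r, hr⟩ x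

theorem adaptedSeminorm_le (hT : IsExpBoundedSemigroup T M ν) {x : E} {c : ℝ}
    (hc : ∀ r : ℝ, 0 ≤ r → ‖Real.exp (ν * r) • T r x‖ ≤ c) : adaptedSeminorm T ν x ≤ c := by
  rw [adaptedSeminorm, Seminorm.iSup_apply hT.bddAbove_range_exp_smul]
  exact ciSup_le fun r => hc r r.2

theorem norm_le_adaptedSeminorm (hT : IsExpBoundedSemigroup T M ν) (x : E) :
    ‖x‖ ≤ adaptedSeminorm T ν x := by
  simpa [hT.apply_zero] using hT.norm_exp_smul_le le_rfl x

theorem adaptedSeminorm_le_mul_norm (hT : IsExpBoundedSemigroup T M ν) (x : E) :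
    adaptedSeminorm T ν x ≤ M * ‖x‖ :=
  hT.adaptedSeminorm_le fun _ hr => hT.exp_smul_norm_le hr x

theorem adaptedSeminorm_apply_le (hT : IsExpBoundedSemigroup T M ν) {t : ℝ} (ht : 0 ≤ t) (x : E) :
    adaptedSeminorm T ν (T t x) ≤ Real.exp (-ν * t) * adaptedSeminorm T ν x := by
  refine hT.adaptedSeminorm_le fun r hr => ?_
  have shift : Real.exp (ν * r) • T r (T t x)
      = Real.exp (-ν * t) • Real.exp (ν * (r + t)) • T (r + t) x := by
    rw [hT.apply_add r t hr ht, smul_smul, ← Real.exp_add, ContinuousLinearMap.comp_apply]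
    ring_nf
  rw [shift, norm_smul, Real.norm_of_nonneg (Real.exp_pos _).le]
  gcongr
  exact hT.norm_exp_smul_le (add_nonneg hr ht) x

theorem adaptedSeminorm_integral_le [CompleteSpace E] (hT : IsExpBoundedSemigroup T M ν)
    {a b : ℝ} (hab : a ≤ b) {g : ℝ → E} {φ : ℝ → ℝ} (hg : IntervalIntegrable g volume a b)
    (hφ : IntervalIntegrable φ volume a b)
    (hgφ : ∀ s ∈ Ioc a b, adaptedSeminorm T ν (g s) ≤ φ s) :
    adaptedSeminorm T ν (∫ s in a..b, g s) ≤ ∫ s in a..b, φ s := by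
  refine hT.adaptedSeminorm_le fun r hr => ?_
  rw [← (T r).intervalIntegral_comp_comm hg, ← intervalIntegral.integral_smul]
  exact intervalIntegral.norm_integral_le_of_norm_le hab
    (.of_forall fun s hs => (hT.norm_exp_smul_le hr _).trans (hgφ s hs)) hφ

theorem const_nonneg (hT : IsExpBoundedSemigroup T M ν) : 0 ≤ M := by
  simpa using (norm_nonneg _).trans (hT.opNorm_le 0 le_rfl)

theorem continuousOn_uncurry (hT : IsExpBoundedSemigroup T M ν) (hν : 0 ≤ ν) :
    ContinuousOn (fun p : ℝ × E => T p.1 p.2) (Ici 0 ×ˢ univ) := by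
  refine continuousOn_prod_of_continuousOn_lipschitzOnWith' _ ⟨M, hT.const_nonneg⟩
    (fun t ht => ?_) fun x _ => hT.continuousOn_orbit x
  have norm_T_le : ‖T t‖ ≤ M :=
    (hT.opNorm_le t ht).trans <| mul_le_of_le_one_right hT.const_nonneg <|
      Real.exp_le_one_iff.2 (mul_nonpos_of_nonpos_of_nonneg (neg_nonpos.2 hν) ht)
  exact ((T t).lipschitz.weaken norm_T_le).lipschitzOnWith

section Resolvent

variable {ω : ℝ} {S : E → E}

theorem adaptedSeminorm_resolvent_le (hT : IsExpBoundedSemigroup T M ν) (hν : 0 < ν) (hω : 0 < ω)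
    (hS : ∀ x, S x - T ω (S x) = x) (x : E) :
    adaptedSeminorm T ν (S x) ≤ adaptedSeminorm T ν x / (1 - Real.exp (-ν * ω)) := by
  rw [le_div_iff₀ (sub_pos.2 (exp_neg_mul_lt_one hν hω))]
  have h : adaptedSeminorm T ν (S x)
      ≤ adaptedSeminorm T ν x + Real.exp (-ν * ω) * adaptedSeminorm T ν (S x) :=
    calc adaptedSeminorm T ν (S x) = adaptedSeminorm T ν (x + T ω (S x)) := by
          rw [← sub_eq_iff_eq_add.1 (hS x)]
      _ ≤ adaptedSeminorm T ν x + adaptedSeminorm T ν (T ω (S x)) := map_add_le_add ..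
      _ ≤ _ := by gcongr; exact hT.adaptedSeminorm_apply_le hω.le _
  linarith

theorem resolvent_mem (hT : IsExpBoundedSemigroup T M ν) (hν : 0 < ν) (hω : 0 < ω)
    (hS : ∀ x, S x - T ω (S x) = x) {K : ProperCone ℝ E} (hTK : MapsTo (T ω) K K) {x : E}
    (hx : x ∈ K) : S x ∈ K :=
  mem_of_sub_map_mem (B := (T ω).toLinearMap) K hT.norm_le_adaptedSeminorm (Real.exp_pos _).le
    (exp_neg_mul_lt_one hν hω) (hT.adaptedSeminorm_apply_le hω.le) hTK ((hS x).symm ▸ hx)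

end Resolvent

end IsExpBoundedSemigroup
end Semigroup

section Duhamel

variable {E : Type*} [NormedAddCommGroup E] [NormedSpace ℝ E]

/-- The value at time `t` of the mild solution of `du/dt = A u + g`, `u (t - ω) = 0`, where `A` is
the generator of `T`. -/
noncomputable def duhamelIntegral (T : ℝ → E →L[ℝ] E) (ω : ℝ) (g : ℝ → E) (t : ℝ) : E :=
  ∫ s in (t - ω)..t, T (t - s) (g s)

theorem duhamelIntegral_eq (T : ℝ → E →L[ℝ] E) (ω : ℝ) (g : ℝ → E) (t : ℝ) :
    duhamelIntegral T ω g t = ∫ r in (0 : ℝ)..ω, T r (g (t - r)) := by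
  simpa only [duhamelIntegral, sub_sub_cancel, sub_zero] using
    (intervalIntegral.integral_comp_sub_left (a := 0) (b := ω) (fun s => T (t - s) (g s)) t).symm

theorem duhamelIntegral_smul (T : ℝ → E →L[ℝ] E) (ω c : ℝ) (g : ℝ → E) (t : ℝ) :
    duhamelIntegral T ω (c • g) t = c • duhamelIntegral T ω g t := by
  simp only [duhamelIntegral, Pi.smul_apply, map_smul, intervalIntegral.integral_smul]

variable {T : ℝ → E →L[ℝ] E} {M ν ω : ℝ}

theorem duhamelIntegral_mem [CompleteSpace E] {K : ProperCone ℝ E}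
    (hTK : ∀ t, 0 ≤ t → MapsTo (T t) K K) (hω : 0 ≤ ω) {g : ℝ → E} (hg : ∀ s, g s ∈ K) (t : ℝ) :
    duhamelIntegral T ω g t ∈ K := by
  rw [duhamelIntegral_eq, intervalIntegral.integral_of_le hω]
  exact integral_mem_properCone K <| ae_restrict_of_forall_mem measurableSet_Ioc
    fun r hr => hTK r hr.1.le (hg _)

namespace IsExpBoundedSemigroup

theorem intervalIntegrable_apply (hT : IsExpBoundedSemigroup T M ν) (hν : 0 ≤ ν) (hω : 0 ≤ ω)
    {g : ℝ → E} (hg : Continuous g) (t : ℝ) :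
    IntervalIntegrable (fun r => T r (g (t - r))) volume 0 ω := by
  refine ContinuousOn.intervalIntegrable ?_
  rw [uIcc_of_le hω]
  exact (hT.continuousOn_uncurry hν).comp (f := fun r => (r, g (t - r))) (by fun_prop)
    fun r hr => ⟨hr.1, mem_univ _⟩

theorem continuous_duhamelIntegral (hT : IsExpBoundedSemigroup T M ν) (hν : 0 ≤ ν) (hω : 0 ≤ ω)
    (g : ℝ →ᵇ E) : Continuous (duhamelIntegral T ω g) := by
  simp only [funext (duhamelIntegral_eq T ω g)]
  refine intervalIntegral.continuous_of_dominated_interval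
    (bound := fun r => M * Real.exp (-ν * r) * ‖g‖)
    (fun t => (hT.intervalIntegrable_apply hν hω g.continuous t).def'.aestronglyMeasurable)
    (fun t => .of_forall fun r hr => ?_) (Continuous.intervalIntegrable (by fun_prop) _ _)
    (.of_forall fun r _ => by fun_prop)
  rw [uIoc_of_le hω] at hr
  exact (T r).le_of_opNorm_le_of_le (hT.opNorm_le r hr.1.le) (g.norm_coe_le_norm _)

theorem duhamelIntegral_add (hT : IsExpBoundedSemigroup T M ν) (hν : 0 ≤ ν) (hω : 0 ≤ ω)
    {f g : ℝ → E} (hf : Continuous f) (hg : Continuous g) (t : ℝ) :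
    duhamelIntegral T ω (f + g) t = duhamelIntegral T ω f t + duhamelIntegral T ω g t := by
  simp only [duhamelIntegral_eq, Pi.add_apply, map_add]
  exact intervalIntegral.integral_add (hT.intervalIntegrable_apply hν hω hf t)
    (hT.intervalIntegrable_apply hν hω hg t)

variable [CompleteSpace E]

theorem adaptedSeminorm_duhamelIntegral_le (hT : IsExpBoundedSemigroup T M ν) (hν : 0 < ν)
    (hω : 0 ≤ ω) {g : ℝ → E} (hg : Continuous g) {c : ℝ}
    (hgc : ∀ s, adaptedSeminorm T ν (g s) ≤ c) (t : ℝ) :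
    adaptedSeminorm T ν (duhamelIntegral T ω g t) ≤ (1 - Real.exp (-ν * ω)) / ν * c := by
  rw [duhamelIntegral_eq, ← integral_exp_neg_mul hν.ne', ← intervalIntegral.integral_mul_const]
  refine hT.adaptedSeminorm_integral_le hω (hT.intervalIntegrable_apply hν.le hω hg t)
    (Continuous.intervalIntegrable (by fun_prop) _ _) fun r hr => ?_
  exact (hT.adaptedSeminorm_apply_le hr.1.le _).trans
    (mul_le_mul_of_nonneg_left (hgc _) (Real.exp_pos _).le)

variable {S : E →L[ℝ] E}

theorem adaptedSeminorm_resolvent_duhamelIntegral_le (hT : IsExpBoundedSemigroup T M ν)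
    (hν : 0 < ν) (hω : 0 < ω) (hS : ∀ x, S x - T ω (S x) = x) (g : ℝ →ᵇ E) (t : ℝ) :
    adaptedSeminorm T ν (S (duhamelIntegral T ω g t))
      ≤ supSeminorm ℝ (adaptedSeminorm T ν) g / ν := by
  have hρ : 0 < 1 - Real.exp (-ν * ω) := sub_pos.2 (exp_neg_mul_lt_one hν hω)
  calc adaptedSeminorm T ν (S (duhamelIntegral T ω g t))
      ≤ adaptedSeminorm T ν (duhamelIntegral T ω g t) / (1 - Real.exp (-ν * ω)) :=
        hT.adaptedSeminorm_resolvent_le hν hω hS _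
    _ ≤ (1 - Real.exp (-ν * ω)) / ν * supSeminorm ℝ (adaptedSeminorm T ν) g
          / (1 - Real.exp (-ν * ω)) := by
        gcongr
        exact hT.adaptedSeminorm_duhamelIntegral_le hν hω.le g.continuous
          (le_supSeminorm hT.adaptedSeminorm_le_mul_norm g) t
    _ = supSeminorm ℝ (adaptedSeminorm T ν) g / ν := by
        rw [div_mul_eq_mul_div, div_right_comm, mul_div_cancel_left₀ _ hρ.ne']

/-- The operator `P` with `(P g) t = S ∫_{t-ω}^t T (t - s) g s ds`, where `S = (I - T ω)⁻¹`. For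
`ω`-periodic `g` it is the `ω`-periodic mild solution of `du/dt = A u + g`, with `A` the generator
of `T`; the formula and its bounds make sense without periodicity, so `P` acts on all bounded
continuous functions. -/
noncomputable def periodicSolution (hT : IsExpBoundedSemigroup T M ν) (hν : 0 < ν) (hω : 0 < ω)
    (hS : ∀ x, S x - T ω (S x) = x) : (ℝ →ᵇ E) →ₗ[ℝ] (ℝ →ᵇ E) where
  toFun g := .ofNormedAddCommGroup (fun t => S (duhamelIntegral T ω g t))
    (S.continuous.comp (hT.continuous_duhamelIntegral hν.le hω.le g))
    (supSeminorm ℝ (adaptedSeminorm T ν) g / ν) fun t =>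
      (hT.norm_le_adaptedSeminorm _).trans
        (hT.adaptedSeminorm_resolvent_duhamelIntegral_le hν hω hS g t)
  map_add' f g := BoundedContinuousFunction.ext fun t =>
    (congrArg S (hT.duhamelIntegral_add hν.le hω.le f.continuous g.continuous t)).trans
      (map_add S _ _)
  map_smul' c g := BoundedContinuousFunction.ext fun t =>
    (congrArg S (duhamelIntegral_smul T ω c g t)).trans (map_smul S c _)

theorem periodicSolution_mem (hT : IsExpBoundedSemigroup T M ν) (hν : 0 < ν) (hω : 0 < ω)
    (hS : ∀ x, S x - T ω (S x) = x) {K : ProperCone ℝ E}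
    (hTK : ∀ t, 0 ≤ t → MapsTo (T t) K K) {g : ℝ →ᵇ E} (hg : g ∈ pointwiseCone ℝ K) :
    hT.periodicSolution hν hω hS g ∈ pointwiseCone ℝ K :=
  mem_pointwiseCone.2 fun t => hT.resolvent_mem hν hω hS (hTK ω hω.le)
    (duhamelIntegral_mem hTK hω.le (mem_pointwiseCone.1 hg) t)

theorem supSeminorm_periodicSolution_le (hT : IsExpBoundedSemigroup T M ν) (hν : 0 < ν)
    (hω : 0 < ω) (hS : ∀ x, S x - T ω (S x) = x) (g : ℝ →ᵇ E) :
    supSeminorm ℝ (adaptedSeminorm T ν) (hT.periodicSolution hν hω hS g)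
      ≤ supSeminorm ℝ (adaptedSeminorm T ν) g / ν :=
  supSeminorm_le hT.adaptedSeminorm_le_mul_norm
    (hT.adaptedSeminorm_resolvent_duhamelIntegral_le hν hω hS g)

end IsExpBoundedSemigroup
end Duhamel

section Delay

variable {E : Type*} [NormedAddCommGroup E] [NormedSpace ℝ E]

/-- The delay operator `w ↦ w (· - τ)`. -/
noncomputable def delay (τ : ℝ) : (ℝ →ᵇ E) →ₗ[ℝ] (ℝ →ᵇ E) where
  toFun w := w.compContinuous ⟨fun t => t - τ, by fun_prop⟩
  map_add' _ _ := rfl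
  map_smul' _ _ := rfl

/-- The linear majorant `w ↦ C₁ w + C₂ w (· - τ)` of the nonlinearity in (H1), without its constant
term `h₀`. -/
noncomputable def delayCombination (C₁ C₂ τ : ℝ) : (ℝ →ᵇ E) →ₗ[ℝ] (ℝ →ᵇ E) :=
  C₁ • LinearMap.id + C₂ • delay τ

variable {C₁ C₂ τ : ℝ}

theorem delayCombination_mem (hC₁ : 0 ≤ C₁) (hC₂ : 0 ≤ C₂) {K : ProperCone ℝ E} {w : ℝ →ᵇ E}
    (hw : w ∈ pointwiseCone ℝ K) : delayCombination C₁ C₂ τ w ∈ pointwiseCone ℝ K := by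
  rw [mem_pointwiseCone] at hw ⊢
  exact fun t => add_mem (K.smul_mem (hw t) hC₁) (K.smul_mem (hw (t - τ)) hC₂)

theorem supSeminorm_delayCombination_le {p : Seminorm ℝ E} {c : ℝ} (hp : ∀ x, p x ≤ c * ‖x‖)
    (hC₁ : 0 ≤ C₁) (hC₂ : 0 ≤ C₂) (w : ℝ →ᵇ E) :
    supSeminorm ℝ p (delayCombination C₁ C₂ τ w) ≤ (C₁ + C₂) * supSeminorm ℝ p w := by
  refine supSeminorm_le hp fun t => ?_
  calc p (C₁ • w t + C₂ • w (t - τ)) ≤ p (C₁ • w t) + p (C₂ • w (t - τ)) := map_add_le_add ..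
    _ = C₁ * p (w t) + C₂ * p (w (t - τ)) := by
      simp only [map_smul_eq_mul, Real.norm_of_nonneg hC₁, Real.norm_of_nonneg hC₂]
    _ ≤ C₁ * supSeminorm ℝ p w + C₂ * supSeminorm ℝ p w := by
      gcongr <;> exact le_supSeminorm hp w _
    _ = (C₁ + C₂) * supSeminorm ℝ p w := by ring

end Delay

section Main

variable {E : Type*} [NormedAddCommGroup E] [NormedSpace ℝ E] [CompleteSpace E]

theorem norm_le_of_eq_smul_periodicSolution (K : ProperCone ℝ E) {N : ℝ} (hN : 0 ≤ N)
    (hK : ∀ x y, x ∈ K → y - x ∈ K → ‖x‖ ≤ N * ‖y‖)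
    {T : ℝ → E →L[ℝ] E} {M ν : ℝ} (hT : IsExpBoundedSemigroup T M ν) (hν : 0 < ν)
    (hTK : ∀ t, 0 ≤ t → MapsTo (T t) K K) {ω τ : ℝ} (hω : 0 < ω) {S : E →L[ℝ] E}
    (hS : ∀ x, S x - T ω (S x) = x) {C₁ C₂ : ℝ} (hC₁ : 0 ≤ C₁) (hC₂ : 0 ≤ C₂) (hC : C₁ + C₂ < ν)
    {u f h : ℝ →ᵇ E} (hu : u ∈ pointwiseCone ℝ K) (hf : f ∈ pointwiseCone ℝ K)
    (hfu : delayCombination C₁ C₂ τ u + h - f ∈ pointwiseCone ℝ K) {η : ℝ} (hη : η ≤ 1)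
    (huf : u = η • hT.periodicSolution hν hω hS f) :
    ‖u‖ ≤ N * (M * ‖h‖ / (ν - (C₁ + C₂))) := by
  let P := hT.periodicSolution hν hω hS
  let L : (ℝ →ᵇ E) →ₗ[ℝ] (ℝ →ᵇ E) := delayCombination C₁ C₂ τ
  let p := supSeminorm ℝ (adaptedSeminorm T ν)
  have p_PL_le (w : ℝ →ᵇ E) : p (P (L w)) ≤ (C₁ + C₂) / ν * p w :=
    calc p (P (L w)) ≤ p (L w) / ν := hT.supSeminorm_periodicSolution_le hν hω hS _
      _ ≤ (C₁ + C₂) * p w / ν := by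
        gcongr; exact supSeminorm_delayCombination_le hT.adaptedSeminorm_le_mul_norm hC₁ hC₂ w
      _ = (C₁ + C₂) / ν * p w := by ring
  have u_subsolution : P (L u) + P h - u ∈ pointwiseCone ℝ K := by
    have defect_eq : P (L u) + P h - u = P (L u + h - f + (1 - η) • f) := by
      simp only [map_add, map_sub, map_smul, huf, P]; module
    rw [defect_eq]
    exact hT.periodicSolution_mem hν hω hS hTK
      (add_mem hfu ((pointwiseCone ℝ K).smul_mem hf (sub_nonneg.2 hη)))
  have p_Ph_le : p (P h) ≤ M * ‖h‖ / ν :=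
    calc p (P h) ≤ p h / ν := hT.supSeminorm_periodicSolution_le hν hω hS h
      _ ≤ M * ‖h‖ / ν := by
        gcongr
        exact supSeminorm_le_mul_norm hT.const_nonneg hT.adaptedSeminorm_le_mul_norm h
  have q_lt_one : (C₁ + C₂) / ν < 1 := (div_lt_one hν).2 hC
  calc ‖u‖ ≤ N * (p (P h) / (1 - (C₁ + C₂) / ν)) :=
        norm_le_of_map_add_sub_mem (B := P ∘ₗ L) (pointwiseCone ℝ K).toPointedCone hN
          (norm_le_of_mem_pointwiseCone hN hK)
          (norm_le_supSeminorm hT.adaptedSeminorm_le_mul_norm hT.norm_le_adaptedSeminorm)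
          (by positivity) q_lt_one p_PL_le
          (fun w hw => hT.periodicSolution_mem hν hω hS hTK (delayCombination_mem hC₁ hC₂ hw))
          hu u_subsolution
    _ ≤ N * (M * ‖h‖ / ν / (1 - (C₁ + C₂) / ν)) := by gcongr
    _ = N * (M * ‖h‖ / (ν - (C₁ + C₂))) := by
      rw [div_div, mul_sub, mul_one, mul_div_cancel₀ _ hν.ne']

theorem stmt8_general (K : ProperCone ℝ E) {N : ℝ} (hN : 0 ≤ N)
    (hK : ∀ x y, x ∈ K → y - x ∈ K → ‖x‖ ≤ N * ‖y‖)
    {T : ℝ → E →L[ℝ] E} {M ν : ℝ} (hT : IsExpBoundedSemigroup T M ν)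
    (hTK : ∀ t, 0 ≤ t → MapsTo (T t) K K) {ω τ : ℝ} (hω : 0 < ω)
    {F : ℝ → E → E → E}
    (hFcont : ContinuousOn (fun p : ℝ × E × E => F p.1 p.2.1 p.2.2) (univ ×ˢ K ×ˢ K))
    (hFK : ∀ t, ∀ x ∈ K, ∀ y ∈ K, F t x y ∈ K)
    {C₁ C₂ : ℝ} (hC₁ : 0 ≤ C₁) (hC₂ : 0 ≤ C₂) (hC : C₁ + C₂ < ν) {h₀ : ℝ →ᵇ E}
    (hF : ∀ t, ∀ x ∈ K, ∀ y ∈ K, C₁ • x + C₂ • y + h₀ t - F t x y ∈ K)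
    {S : E →L[ℝ] E} (hS : ∀ x, S x - T ω (S x) = x)
    {u : ℝ →ᵇ E} (hu : ∀ t, u t ∈ K) {η : ℝ} (hη : η ≤ 1)
    (huF : ∀ t, u t = η • S (∫ s in (t - ω)..t, T (t - s) (F s (u s) (u (s - τ))))) :
    ‖u‖ ≤ N * (M * ‖h₀‖ / (ν - (C₁ + C₂))) := by
  have hν : 0 < ν := (add_nonneg hC₁ hC₂).trans_lt hC
  have hFu : Continuous fun s => F s (u s) (u (s - τ)) :=
    hFcont.comp_continuous (f := fun s => (s, u s, u (s - τ))) (by fun_prop)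
      fun s => ⟨trivial, hu _, hu _⟩
  have hFu_mem (s : ℝ) : F s (u s) (u (s - τ)) ∈ K := hFK s _ (hu _) _ (hu _)
  have hFu_le (s : ℝ) :
      (delayCombination C₁ C₂ τ u + h₀) s - F s (u s) (u (s - τ)) ∈ K :=
    hF s _ (hu _) _ (hu _)
  obtain ⟨f, hf⟩ := exists_boundedContinuousFunction_of_dominated hN hK hFu hFu_mem hFu_le
  simp only [← congrFun hf] at hFu_mem hFu_le huF
  exact norm_le_of_eq_smul_periodicSolution K hN hK hT hν hTK hω hS hC₁ hC₂ hC
    (mem_pointwiseCone.2 hu) (mem_pointwiseCone.2 hFu_mem) (mem_pointwiseCone.2 hFu_le) hη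
    (BoundedContinuousFunction.ext huF)

end Main

section Bundling

variable {E : Type*} [NormedAddCommGroup E]

/-- A nonempty closed convex cone given as a set, bundled as a `ProperCone`. -/
def properConeOfIsClosed [NormedSpace ℝ E] (K : Set E) (hclosed : IsClosed K) (hne : K.Nonempty)
    (hadd : ∀ x ∈ K, ∀ y ∈ K, x + y ∈ K) (hsmul : ∀ c : ℝ, 0 ≤ c → ∀ x ∈ K, c • x ∈ K) :
    ProperCone ℝ E where
  carrier := K
  add_mem' {x y} hx hy := hadd x hx y hy
  zero_mem' := hne.elim fun x hx => zero_smul ℝ x ▸ hsmul 0 le_rfl x hx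
  smul_mem' c x hx := hsmul c c.2 x hx
  isClosed' := hclosed

/-- A continuous periodic function, bundled as a bounded continuous function: the embedding of
`C_ω(ℝ, E)` into `ℝ →ᵇ E`. -/
def boundedOfPeriodic {u : ℝ → E} {ω : ℝ} (hu : Continuous u) (hper : Function.Periodic u ω)
    (hω : ω ≠ 0) : ℝ →ᵇ E where
  toFun := u
  map_bounded' := Metric.isBounded_range_iff.1 (hper.isBounded_of_continuous hω hu)

end Bundling

/-- Under (H1) (with `C₁ + C₂ < ν`), the Leray–Schauder set
`Λ(Q) = {u ∈ K_C : u = η Q u for some η ∈ (0,1)}` is bounded in the sup norm,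
where `(Qu)(t) = (I - T ω)⁻¹ ∫_{t-ω}^t T(t-s) F(s, u(s), u(s-τ)) ds`. -/
theorem stmt8
    {E : Type*} [NormedAddCommGroup E] [NormedSpace ℝ E] [CompleteSpace E]
    -- the positive cone `K`:
    (K : Set E) (hKclosed : IsClosed K)
    (hKadd : ∀ x ∈ K, ∀ y ∈ K, x + y ∈ K)
    (hKsmul : ∀ c : ℝ, 0 ≤ c → ∀ x ∈ K, c • x ∈ K)
    (hKpointed : ∀ x : E, x ∈ K → -x ∈ K → x = 0)
    -- `K` is normal with normal constant `N`:
    (N : ℝ) (hN : 0 < N)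
    (hKnormal : ∀ x y : E, x ∈ K → y - x ∈ K → ‖x‖ ≤ N * ‖y‖)
    -- `T` is a positive compact C₀-semigroup with `‖T t‖ ≤ M e^{-ν t}`:
    (T : ℝ → E →L[ℝ] E) (M ν : ℝ) (hM : 1 ≤ M) (hν : 0 < ν)
    (hT0 : T 0 = ContinuousLinearMap.id ℝ E)
    (hTsemi : ∀ t s : ℝ, 0 ≤ t → 0 ≤ s → T (t + s) = (T t).comp (T s))
    (hTcont : ∀ x : E, ContinuousOn (fun t : ℝ => T t x) (Set.Ici (0 : ℝ)))
    (hTnorm : ∀ t : ℝ, 0 ≤ t → ‖T t‖ ≤ M * Real.exp (-ν * t))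
    (hTpos : ∀ t : ℝ, 0 ≤ t → Set.MapsTo (T t) K K)
    (hTcompact : ∀ t : ℝ, 0 < t → IsCompactOperator (T t))
    (ω τ : ℝ) (hω : 0 < ω) (hτ : 0 < τ)
    -- `F : ℝ × K × K → K` continuous and ω-periodic in `t`:
    (F : ℝ → E → E → E)
    (hFcont : ContinuousOn (fun p : ℝ × E × E => F p.1 p.2.1 p.2.2)
      (Set.univ ×ˢ K ×ˢ K))
    (hFmaps : ∀ t : ℝ, ∀ x ∈ K, ∀ y ∈ K, F t x y ∈ K)
    (hFper : ∀ t : ℝ, ∀ x ∈ K, ∀ y ∈ K, F (t + ω) x y = F t x y)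
    -- (H1):
    (C₁ C₂ : ℝ) (hC₁ : 0 < C₁) (hC₂ : 0 < C₂) (hC : C₁ + C₂ < ν)
    (h₀ : ℝ → E) (hh₀cont : Continuous h₀) (hh₀per : ∀ t : ℝ, h₀ (t + ω) = h₀ t)
    (hh₀pos : ∀ t : ℝ, h₀ t ∈ K)
    (hH1 : ∀ t : ℝ, ∀ x ∈ K, ∀ y ∈ K,
      C₁ • x + C₂ • y + h₀ t - F t x y ∈ K)
    -- `S = (I - T ω)⁻¹`:
    (S : E →L[ℝ] E)
    (hS₁ : (ContinuousLinearMap.id ℝ E - T ω).comp S = ContinuousLinearMap.id ℝ E)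
    (hS₂ : S.comp (ContinuousLinearMap.id ℝ E - T ω) = ContinuousLinearMap.id ℝ E) :
    -- the set `Λ(Q)` is bounded in the sup norm:
    ∃ R : ℝ, ∀ u : ℝ → E,
      Continuous u → (∀ t : ℝ, u (t + ω) = u t) → (∀ t : ℝ, u t ∈ K) →
      (∃ η : ℝ, 0 < η ∧ η < 1 ∧ ∀ t : ℝ,
        u t = η • S (∫ s in (t - ω)..t, T (t - s) (F s (u s) (u (s - τ))))) →
      ∀ t : ℝ, ‖u t‖ ≤ R := by
  let h : ℝ →ᵇ E := boundedOfPeriodic hh₀cont hh₀per hω.ne'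
  have hT : IsExpBoundedSemigroup T M ν := ⟨hT0, hTsemi, hTcont, hTnorm⟩
  have hS (x : E) : S x - T ω (S x) = x := DFunLike.congr_fun hS₁ x
  refine ⟨N * (M * ‖h‖ / (ν - (C₁ + C₂))), fun u hu hper huK ⟨η, _, hη, huF⟩ t => ?_⟩
  exact ((boundedOfPeriodic hu hper hω.ne').norm_coe_le_norm t).trans <|
    stmt8_general (properConeOfIsClosed K hKclosed ⟨_, hh₀pos 0⟩ hKadd hKsmul) hN.le hKnormal
      hT hTpos hω hFcont hFmaps hC₁.le hC₂.le hC (h₀ := h) hH1 hS huK hη.le huF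
end
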